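/- Assume: 0.9·d_{i0} ≤ d_i ≤ 1.1·d_{i0}, 0.9·d_0 ≤ d ≤ 1.1·d_0, ρ ≥ d² + 2‖e‖², 0 < ε ≤ 1/15; the Local RIP holds; ‖𝒜*(e)‖ ≤ εd_0/(10√2·sκ); the Local Regularity Condition holds with ω = d_0/7000 and c = ‖e‖² + 2000s‖𝒜*(e)‖², i.e. ‖∇F̃(z)‖² ≥ ω·max(F̃(z) − c, 0) for all z ∈ 𝒩_d ∩ 𝒩_μ ∩ 𝒩_ε; and there is C_L > 0 with ηω ≤ 1 and 0 < η ≤ 1/C_L such that ‖∇F̃(z + tΔz) − ∇F̃(z)‖ ≤ C_L·t·‖Δz‖ for t ∈ [0,1] whenever the segment {z + τΔz : τ ∈ [0,1]} lies in 𝒩_ε ∩ 𝒩_F̃. Let z^{(0)} = (u^{(0)},v^{(0)}) satisfy ‖u_i^{(0)}‖ ≤ (2/√3)√d_{i0}, ‖v_i^{(0)}‖ ≤ (2/√3)√d_{i0}, √L‖Bu_i^{(0)}‖_∞ ≤ (4/√3)√d_{i0}μ, and δ_i(u_i^{(0)},v_i^{(0)}) ≤ 2ε/(5√s·κ) for all i,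 and define z^{(t+1)} = z^{(t)} − η∇F̃(z^{(t)}). Then for every t ≥ 0: ‖ℋ(z^{(t)}) − X_0‖_F ≤ (εd_0/√(2sκ²))·(1 − ηω)^{t/2} + 60√s·‖𝒜*(e)‖. -/

import Mathlib

noncomputable section
open Finset ComplexConjugate

namespace RGD

/-- Squared Euclidean norm of a complex vector. -/
def vnormSq {n : ℕ} (v : Fin n → ℂ) : ℝ := ∑ j, ‖v j‖ ^ 2

/-- Euclidean norm of a complex vector. -/
def vnorm {n : ℕ} (v : Fin n → ℂ) : ℝ := Real.sqrt (vnormSq v)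

/-- Inner product, conjugate-linear in the first argument. -/
def vinner {n : ℕ} (u v : Fin n → ℂ) : ℂ := ∑ j, conj (u j) * v j

/-- Squared Frobenius norm of a matrix. -/
def frobSq {K N : ℕ} (Z : Matrix (Fin K) (Fin N) ℂ) : ℝ := ∑ k, ∑ j, ‖Z k j‖ ^ 2

/-- Frobenius norm of a matrix. -/
def frob {K N : ℕ} (Z : Matrix (Fin K) (Fin N) ℂ) : ℝ := Real.sqrt (frobSq Z)

/-- Frobenius inner product `⟨U,V⟩ = Tr(U*V)`, conjugate-linear in the first argument. -/
def finner {K N : ℕ} (U V : Matrix (Fin K) (Fin N) ℂ) : ℂ := ∑ k, ∑ j, conj (U k j) * V k j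

/-- Spectral (operator) norm of a matrix: sup of `‖Zv‖` over the closed unit ball. -/
def opNorm {K N : ℕ} (Z : Matrix (Fin K) (Fin N) ℂ) : ℝ :=
  sSup {r : ℝ | ∃ v : Fin N → ℂ, vnorm v ≤ 1 ∧ r = vnorm (Z.mulVec v)}

/-- Squared Frobenius norm of a block-diagonal matrix, given by its diagonal blocks. -/
def famFrobSq {K N s : ℕ} (Z : Fin s → Matrix (Fin K) (Fin N) ℂ) : ℝ := ∑ i, frobSq (Z i)

/-- Frobenius norm of a block-diagonal matrix, given by its diagonal blocks. -/
def famFrob {K N s : ℕ} (Z : Fin s → Matrix (Fin K) (Fin N) ℂ) : ℝ := Real.sqrt (famFrobSq Z)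

/-- The rank-one matrix `u v*`. -/
def rankOne {K N : ℕ} (u : Fin K → ℂ) (v : Fin N → ℂ) : Matrix (Fin K) (Fin N) ℂ :=
  Matrix.of fun k j => u k * conj (v j)

/-- `ℋ(h,x)`: block-diagonal matrix with `i`-th block `hᵢ xᵢ*`. -/
def Hmap {K N s : ℕ} (h : Fin s → Fin K → ℂ) (x : Fin s → Fin N → ℂ) :
    Fin s → Matrix (Fin K) (Fin N) ℂ := fun i => rankOne (h i) (x i)

/-- `𝒜ᵢ(Z) = (bₗ* Z aₗ)ₗ`. -/
def calAi {K N L : ℕ} (b : Fin L → Fin K → ℂ) (a : Fin L → Fin N → ℂ)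
    (Z : Matrix (Fin K) (Fin N) ℂ) : Fin L → ℂ :=
  fun l => vinner (b l) (Z.mulVec (a l))

/-- `𝒜(Z) = Σᵢ 𝒜ᵢ(Zᵢ)` on block-diagonal matrices. -/
def calA {K N L s : ℕ} (b : Fin L → Fin K → ℂ) (a : Fin s → Fin L → Fin N → ℂ)
    (Z : Fin s → Matrix (Fin K) (Fin N) ℂ) : Fin L → ℂ :=
  fun l => ∑ i, calAi b (a i) (Z i) l

/-- `𝒜ᵢ*(z) = Σₗ zₗ bₗ aₗ*`. -/
def calAdj {K N L : ℕ} (b : Fin L → Fin K → ℂ) (a : Fin L → Fin N → ℂ)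
    (z : Fin L → ℂ) : Matrix (Fin K) (Fin N) ℂ :=
  Matrix.of fun k j => ∑ l, z l * b l k * conj (a l j)

/-- `‖𝒜*(e)‖ = maxᵢ ‖𝒜ᵢ*(e)‖` (operator norms). -/
def AadjNorm {K N L s : ℕ} (b : Fin L → Fin K → ℂ) (a : Fin s → Fin L → Fin N → ℂ)
    (e : Fin L → ℂ) : ℝ :=
  ⨆ i : Fin s, opNorm (calAdj b (a i) e)

/-- `B*B = I_K`, expressed in terms of the columns `bₗ` of `B*`. -/
def BtBeqI {K L : ℕ} (b : Fin L → Fin K → ℂ) : Prop :=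
  ∀ k k' : Fin K, (∑ l, b l k * conj (b l k')) = if k = k' then (1 : ℂ) else 0

/-- `μ ≥ μ_h`, i.e. `√L ‖B h_{i0}‖_∞ ≤ μ ‖h_{i0}‖` for all `i`. -/
def muhLe {K L s : ℕ} (b : Fin L → Fin K → ℂ) (h0 : Fin s → Fin K → ℂ) (μ : ℝ) : Prop :=
  ∀ i l, Real.sqrt L * ‖vinner (b l) (h0 i)‖ ≤ μ * vnorm (h0 i)

/-- `d₀ = √(Σᵢ d_{i0}²)`. -/
def dtot {s : ℕ} (d0 : Fin s → ℝ) : ℝ := Real.sqrt (∑ i, d0 i ^ 2)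

/-- Condition number `κ = (maxᵢ d_{i0}) / (minᵢ d_{i0})`. -/
def kappa {s : ℕ} (d0 : Fin s → ℝ) : ℝ := (⨆ i, d0 i) / (⨅ i, d0 i)

/-- The observation `y = 𝒜(ℋ(h₀,x₀)) + e`. -/
def yvec {K N L s : ℕ} (b : Fin L → Fin K → ℂ) (a : Fin s → Fin L → Fin N → ℂ)
    (h0 : Fin s → Fin K → ℂ) (x0 : Fin s → Fin N → ℂ) (e : Fin L → ℂ) : Fin L → ℂ :=
  fun l => calA b a (Hmap h0 x0) l + e l

/-- `F(h,x) = ‖𝒜(ℋ(h,x)) − y‖²`. -/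
def Fobj {K N L s : ℕ} (b : Fin L → Fin K → ℂ) (a : Fin s → Fin L → Fin N → ℂ)
    (h0 : Fin s → Fin K → ℂ) (x0 : Fin s → Fin N → ℂ) (e : Fin L → ℂ)
    (h : Fin s → Fin K → ℂ) (x : Fin s → Fin N → ℂ) : ℝ :=
  vnormSq (fun l => calA b a (Hmap h x) l - yvec b a h0 x0 e l)

def G0 (z : ℝ) : ℝ := max (z - 1) 0 ^ 2

def G0' (z : ℝ) : ℝ := 2 * max (z - 1) 0

/-- The `i`-th regularizer `Gᵢ(hᵢ,xᵢ)` (including the factor `ρ`). -/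
def Gi {K N L : ℕ} (b : Fin L → Fin K → ℂ) (ρ μ di : ℝ)
    (hi : Fin K → ℂ) (xi : Fin N → ℂ) : ℝ :=
  ρ * (G0 (vnormSq hi / (2 * di)) + G0 (vnormSq xi / (2 * di))
    + ∑ l, G0 ((L : ℝ) * ‖vinner (b l) hi‖ ^ 2 / (8 * di * μ ^ 2)))

/-- The regularizer `G(h,x) = Σᵢ Gᵢ(hᵢ,xᵢ)`. -/
def Greg {K N L s : ℕ} (b : Fin L → Fin K → ℂ) (ρ μ : ℝ) (dd : Fin s → ℝ)
    (h : Fin s → Fin K → ℂ) (x : Fin s → Fin N → ℂ) : ℝ :=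
  ∑ i, Gi b ρ μ (dd i) (h i) (x i)

/-- `F̃ = F + G`. -/
def Ftil {K N L s : ℕ} (b : Fin L → Fin K → ℂ) (a : Fin s → Fin L → Fin N → ℂ)
    (h0 : Fin s → Fin K → ℂ) (x0 : Fin s → Fin N → ℂ) (e : Fin L → ℂ)
    (ρ μ : ℝ) (dd : Fin s → ℝ)
    (h : Fin s → Fin K → ℂ) (x : Fin s → Fin N → ℂ) : ℝ :=
  Fobj b a h0 x0 e h x + Greg b ρ μ dd h x

/-- The residual `𝒜(ℋ(h,x)) − y`. -/
def residual {K N L s : ℕ} (b : Fin L → Fin K → ℂ) (a : Fin s → Fin L → Fin N → ℂ)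
    (h0 : Fin s → Fin K → ℂ) (x0 : Fin s → Fin N → ℂ) (e : Fin L → ℂ)
    (h : Fin s → Fin K → ℂ) (x : Fin s → Fin N → ℂ) : Fin L → ℂ :=
  fun l => calA b a (Hmap h x) l - yvec b a h0 x0 e l

/-- Wirtinger gradient `∇F_{hᵢ} = 𝒜ᵢ*(𝒜(ℋ(h,x)) − y) xᵢ`. -/
def gradFh {K N L s : ℕ} (b : Fin L → Fin K → ℂ) (a : Fin s → Fin L → Fin N → ℂ)
    (h0 : Fin s → Fin K → ℂ) (x0 : Fin s → Fin N → ℂ) (e : Fin L → ℂ)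
    (h : Fin s → Fin K → ℂ) (x : Fin s → Fin N → ℂ) (i : Fin s) : Fin K → ℂ :=
  (calAdj b (a i) (residual b a h0 x0 e h x)).mulVec (x i)

/-- Wirtinger gradient `∇F_{xᵢ} = (𝒜ᵢ*(𝒜(ℋ(h,x)) − y))* hᵢ`. -/
def gradFx {K N L s : ℕ} (b : Fin L → Fin K → ℂ) (a : Fin s → Fin L → Fin N → ℂ)
    (h0 : Fin s → Fin K → ℂ) (x0 : Fin s → Fin N → ℂ) (e : Fin L → ℂ)
    (h : Fin s → Fin K → ℂ) (x : Fin s → Fin N → ℂ) (i : Fin s) : Fin N → ℂ :=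
  (calAdj b (a i) (residual b a h0 x0 e h x)).conjTranspose.mulVec (h i)

/-- Wirtinger gradient `∇G_{hᵢ}`. -/
def gradGh {K L s : ℕ} (b : Fin L → Fin K → ℂ) (ρ μ : ℝ) (dd : Fin s → ℝ)
    (h : Fin s → Fin K → ℂ) (i : Fin s) : Fin K → ℂ :=
  fun k => ((ρ / (2 * dd i) : ℝ) : ℂ) *
    (((G0' (vnormSq (h i) / (2 * dd i)) : ℝ) : ℂ) * h i k
      + (((L : ℝ) / (4 * μ ^ 2) : ℝ) : ℂ) *
        ∑ l, ((G0' ((L : ℝ) * ‖vinner (b l) (h i)‖ ^ 2 / (8 * dd i * μ ^ 2)) : ℝ) : ℂ)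
          * (vinner (b l) (h i) * b l k))

/-- Wirtinger gradient `∇G_{xᵢ}`. -/
def gradGx {N s : ℕ} (ρ : ℝ) (dd : Fin s → ℝ)
    (x : Fin s → Fin N → ℂ) (i : Fin s) : Fin N → ℂ :=
  fun j => ((ρ / (2 * dd i) : ℝ) : ℂ) * (((G0' (vnormSq (x i) / (2 * dd i)) : ℝ) : ℂ) * x i j)

/-- `∇F̃_{hᵢ} = ∇F_{hᵢ} + ∇G_{hᵢ}`. -/
def gradH {K N L s : ℕ} (b : Fin L → Fin K → ℂ) (a : Fin s → Fin L → Fin N → ℂ)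
    (h0 : Fin s → Fin K → ℂ) (x0 : Fin s → Fin N → ℂ) (e : Fin L → ℂ)
    (ρ μ : ℝ) (dd : Fin s → ℝ)
    (h : Fin s → Fin K → ℂ) (x : Fin s → Fin N → ℂ) (i : Fin s) : Fin K → ℂ :=
  fun k => gradFh b a h0 x0 e h x i k + gradGh b ρ μ dd h i k

/-- `∇F̃_{xᵢ} = ∇F_{xᵢ} + ∇G_{xᵢ}`. -/
def gradX {K N L s : ℕ} (b : Fin L → Fin K → ℂ) (a : Fin s → Fin L → Fin N → ℂ)
    (h0 : Fin s → Fin K → ℂ) (x0 : Fin s → Fin N → ℂ) (e : Fin L → ℂ)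
    (ρ μ : ℝ) (dd : Fin s → ℝ)
    (h : Fin s → Fin K → ℂ) (x : Fin s → Fin N → ℂ) (i : Fin s) : Fin N → ℂ :=
  fun j => gradFx b a h0 x0 e h x i j + gradGx ρ dd x i j

/-- `‖∇F̃(h,x)‖²` (squared norm of the stacked Wirtinger gradient). -/
def gradNormSq {K N L s : ℕ} (b : Fin L → Fin K → ℂ) (a : Fin s → Fin L → Fin N → ℂ)
    (h0 : Fin s → Fin K → ℂ) (x0 : Fin s → Fin N → ℂ) (e : Fin L → ℂ)
    (ρ μ : ℝ) (dd : Fin s → ℝ)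
    (h : Fin s → Fin K → ℂ) (x : Fin s → Fin N → ℂ) : ℝ :=
  ∑ i, vnormSq (gradH b a h0 x0 e ρ μ dd h x i) + ∑ i, vnormSq (gradX b a h0 x0 e ρ μ dd h x i)

/-- `‖∇F̃(h',x') − ∇F̃(h,x)‖²`. -/
def gradDiffNormSq {K N L s : ℕ} (b : Fin L → Fin K → ℂ) (a : Fin s → Fin L → Fin N → ℂ)
    (h0 : Fin s → Fin K → ℂ) (x0 : Fin s → Fin N → ℂ) (e : Fin L → ℂ)
    (ρ μ : ℝ) (dd : Fin s → ℝ)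
    (h : Fin s → Fin K → ℂ) (x : Fin s → Fin N → ℂ)
    (h' : Fin s → Fin K → ℂ) (x' : Fin s → Fin N → ℂ) : ℝ :=
  ∑ i, vnormSq (fun k => gradH b a h0 x0 e ρ μ dd h' x' i k - gradH b a h0 x0 e ρ μ dd h x i k)
  + ∑ i, vnormSq (fun j => gradX b a h0 x0 e ρ μ dd h' x' i j - gradX b a h0 x0 e ρ μ dd h x i j)

/-- Membership in `𝒩_d`. -/
def inNd {K N s : ℕ} (d0 : Fin s → ℝ)
    (h : Fin s → Fin K → ℂ) (x : Fin s → Fin N → ℂ) : Prop :=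
  ∀ i, vnorm (h i) ≤ 2 * Real.sqrt (d0 i) ∧ vnorm (x i) ≤ 2 * Real.sqrt (d0 i)

/-- Membership in `𝒩_μ`. -/
def inNmu {K L s : ℕ} (b : Fin L → Fin K → ℂ) (d0 : Fin s → ℝ) (μ : ℝ)
    (h : Fin s → Fin K → ℂ) : Prop :=
  ∀ i, ∀ l, Real.sqrt L * ‖vinner (b l) (h i)‖ ≤ 4 * Real.sqrt (d0 i) * μ

/-- `δᵢ(hᵢ,xᵢ) = ‖hᵢxᵢ* − h_{i0}x_{i0}*‖_F / d_{i0}`. -/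
def deltaI {K N : ℕ} (h0i : Fin K → ℂ) (x0i : Fin N → ℂ) (d0i : ℝ)
    (hi : Fin K → ℂ) (xi : Fin N → ℂ) : ℝ :=
  frob (rankOne hi xi - rankOne h0i x0i) / d0i

/-- Membership in `𝒩_ε`. -/
def inNeps {K N s : ℕ} (h0 : Fin s → Fin K → ℂ) (x0 : Fin s → Fin N → ℂ)
    (d0 : Fin s → ℝ) (ε : ℝ)
    (h : Fin s → Fin K → ℂ) (x : Fin s → Fin N → ℂ) : Prop :=
  ∀ i, deltaI (h0 i) (x0 i) (d0 i) (h i) (x i) ≤ ε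

/-- The global relative error `δ(h,x) = ‖ℋ(h,x) − X₀‖_F / d₀`. -/
def deltaTot {K N s : ℕ} (h0 : Fin s → Fin K → ℂ) (x0 : Fin s → Fin N → ℂ)
    (d0 : Fin s → ℝ)
    (h : Fin s → Fin K → ℂ) (x : Fin s → Fin N → ℂ) : ℝ :=
  famFrob (fun i => Hmap h x i - Hmap h0 x0 i) / dtot d0

/-- Membership in `𝒩_F̃`. -/
def inNF {K N L s : ℕ} (b : Fin L → Fin K → ℂ) (a : Fin s → Fin L → Fin N → ℂ)
    (h0 : Fin s → Fin K → ℂ) (x0 : Fin s → Fin N → ℂ) (e : Fin L → ℂ)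
    (d0 : Fin s → ℝ) (ρ μ : ℝ) (dd : Fin s → ℝ) (ε : ℝ)
    (h : Fin s → Fin K → ℂ) (x : Fin s → Fin N → ℂ) : Prop :=
  Ftil b a h0 x0 e ρ μ dd h x ≤ ε ^ 2 * dtot d0 ^ 2 / (3 * (s : ℝ) * kappa d0 ^ 2) + vnormSq e

/-- The Local Restricted Isometry Property on `𝒩_d ∩ 𝒩_μ ∩ 𝒩_ε`. -/
def LocalRIP {K N L s : ℕ} (b : Fin L → Fin K → ℂ) (a : Fin s → Fin L → Fin N → ℂ)
    (h0 : Fin s → Fin K → ℂ) (x0 : Fin s → Fin N → ℂ)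
    (d0 : Fin s → ℝ) (μ ε : ℝ) : Prop :=
  ∀ (h : Fin s → Fin K → ℂ) (x : Fin s → Fin N → ℂ),
    inNd d0 h x → inNmu b d0 μ h → inNeps h0 x0 d0 ε h x →
      (2 / 3) * famFrobSq (fun i => Hmap h x i - Hmap h0 x0 i)
          ≤ vnormSq (calA b a fun i => Hmap h x i - Hmap h0 x0 i)
      ∧ vnormSq (calA b a fun i => Hmap h x i - Hmap h0 x0 i)
          ≤ (3 / 2) * famFrobSq (fun i => Hmap h x i - Hmap h0 x0 i)

/-- `α_{i1} = ⟨h_{i0}, hᵢ⟩ / d_{i0}`. -/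
def alpha1 {K s : ℕ} (h0 : Fin s → Fin K → ℂ) (d0 : Fin s → ℝ)
    (h : Fin s → Fin K → ℂ) (i : Fin s) : ℂ :=
  vinner (h0 i) (h i) / ((d0 i : ℝ) : ℂ)

/-- `α_{i2} = ⟨x_{i0}, xᵢ⟩ / d_{i0}`. -/
def alpha2 {N s : ℕ} (x0 : Fin s → Fin N → ℂ) (d0 : Fin s → ℝ)
    (x : Fin s → Fin N → ℂ) (i : Fin s) : ℂ :=
  vinner (x0 i) (x i) / ((d0 i : ℝ) : ℂ)

/-- `δ₀ = δ/10`. -/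
def delta0 {K N s : ℕ} (h0 : Fin s → Fin K → ℂ) (x0 : Fin s → Fin N → ℂ)
    (d0 : Fin s → ℝ) (h : Fin s → Fin K → ℂ) (x : Fin s → Fin N → ℂ) : ℝ :=
  deltaTot h0 x0 d0 h x / 10

/-- `αᵢ = (1−δ₀)α_{i1}` if `‖hᵢ‖ ≥ ‖xᵢ‖`, else `1/((1−δ₀) conj(α_{i2}))`. -/
def alphaC {K N s : ℕ} (h0 : Fin s → Fin K → ℂ) (x0 : Fin s → Fin N → ℂ)
    (d0 : Fin s → ℝ) (h : Fin s → Fin K → ℂ) (x : Fin s → Fin N → ℂ) (i : Fin s) : ℂ :=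
  if vnorm (x i) ≤ vnorm (h i)
  then ((1 - delta0 h0 x0 d0 h x : ℝ) : ℂ) * alpha1 h0 d0 h i
  else 1 / (((1 - delta0 h0 x0 d0 h x : ℝ) : ℂ) * conj (alpha2 x0 d0 x i))

/-- `Δhᵢ = hᵢ − αᵢ h_{i0}`. -/
def dh {K N s : ℕ} (h0 : Fin s → Fin K → ℂ) (x0 : Fin s → Fin N → ℂ)
    (d0 : Fin s → ℝ) (h : Fin s → Fin K → ℂ) (x : Fin s → Fin N → ℂ) (i : Fin s) :
    Fin K → ℂ :=
  fun k => h i k - alphaC h0 x0 d0 h x i * h0 i k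

/-- `Δxᵢ = xᵢ − conj(αᵢ)⁻¹ x_{i0}`. -/
def dx {K N s : ℕ} (h0 : Fin s → Fin K → ℂ) (x0 : Fin s → Fin N → ℂ)
    (d0 : Fin s → ℝ) (h : Fin s → Fin K → ℂ) (x : Fin s → Fin N → ℂ) (i : Fin s) :
    Fin N → ℂ :=
  fun j => x i j - (conj (alphaC h0 x0 d0 h x i))⁻¹ * x0 i j

/-- `σ²_max(h,x) = maxₗ Σᵢ |bₗ*hᵢ|² ‖xᵢ‖²`. -/
def sigmaMaxSq {K N L s : ℕ} (b : Fin L → Fin K → ℂ)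
    (h : Fin s → Fin K → ℂ) (x : Fin s → Fin N → ℂ) : ℝ :=
  ⨆ l : Fin L, ∑ i, ‖vinner (b l) (h i)‖ ^ 2 * vnormSq (x i)

/-- The rank-one bound (Lemma: `𝒜` on block-diagonal matrices with rank-1 blocks). -/
def RankOneBound {K N L s : ℕ} (b : Fin L → Fin K → ℂ)
    (a : Fin s → Fin L → Fin N → ℂ) : Prop :=
  ∀ (h : Fin s → Fin K → ℂ) (x : Fin s → Fin N → ℂ),
    vnormSq (calA b a (Hmap h x)) ≤
      4 / 3 * famFrobSq (Hmap h x)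
      + 2 * Real.sqrt (2 * (s : ℝ) * famFrobSq (Hmap h x) * sigmaMaxSq b h x
          * ((K : ℝ) + N) * Real.log L)
      + 8 * (s : ℝ) * sigmaMaxSq b h x * ((K : ℝ) + N) * Real.log L

/-- The subspace `Tᵢ = {h_{i0} v* + u x_{i0}*}`. -/
def Tspace {K N : ℕ} (h0i : Fin K → ℂ) (x0i : Fin N → ℂ) :
    Set (Matrix (Fin K) (Fin N) ℂ) :=
  {Z | ∃ (u : Fin K → ℂ) (v : Fin N → ℂ), Z = rankOne h0i v + rankOne u x0i}

/-- `P` is the orthogonal projection onto `Tᵢ` w.r.t. the Frobenius inner product. -/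
def IsFrobProj {K N : ℕ} (h0i : Fin K → ℂ) (x0i : Fin N → ℂ)
    (P : Matrix (Fin K) (Fin N) ℂ → Matrix (Fin K) (Fin N) ℂ) : Prop :=
  ∀ Z, P Z ∈ Tspace h0i x0i ∧ ∀ W ∈ Tspace h0i x0i, finner W (Z - P Z) = 0

/-- Operator norm of `𝒜ᵢ` from `(ℂ^{K×N}, ‖·‖_F)` to `(ℂ^L, ‖·‖)`. -/
def calAiOpNorm {K N L : ℕ} (b : Fin L → Fin K → ℂ) (a : Fin L → Fin N → ℂ) : ℝ :=
  sSup {r : ℝ | ∃ Z : Matrix (Fin K) (Fin N) ℂ, frob Z ≤ 1 ∧ r = vnorm (calAi b a Z)}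

/-- Operator norm of `𝒜` from block-diagonal matrices with `‖·‖_F` to `ℂ^L`. -/
def calAOpNorm {K N L s : ℕ} (b : Fin L → Fin K → ℂ)
    (a : Fin s → Fin L → Fin N → ℂ) : ℝ :=
  sSup {r : ℝ | ∃ Z : Fin s → Matrix (Fin K) (Fin N) ℂ, famFrob Z ≤ 1 ∧ r = vnorm (calA b a Z)}

/-- Norm of a stacked vector in `ℂ^{ns}`. -/
def stackNorm {n s : ℕ} (u : Fin s → Fin n → ℂ) : ℝ := Real.sqrt (∑ i, vnormSq (u i))

/-- Norm of a point `z = (h,x) ∈ ℂ^{s(K+N)}`. -/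
def pairNorm {K N s : ℕ} (u : Fin s → Fin K → ℂ) (v : Fin s → Fin N → ℂ) : ℝ :=
  Real.sqrt (∑ i, vnormSq (u i) + ∑ i, vnormSq (v i))

/-- `z + t • w` componentwise, `t` real. -/
def shiftV {n s : ℕ} (u w : Fin s → Fin n → ℂ) (t : ℝ) : Fin s → Fin n → ℂ :=
  fun i k => u i k + (t : ℂ) * w i k

/-- `σ_max(h) = maxₗ √(Σᵢ |bₗ*hᵢ|²)` (unit `xᵢ`'s). -/
def sigmaMaxU {K L s : ℕ} (b : Fin L → Fin K → ℂ) (h : Fin s → Fin K → ℂ) : ℝ :=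
  ⨆ l, Real.sqrt (∑ i, ‖vinner (b l) (h i)‖ ^ 2)

/-!
The local RIP makes `F̃ − ‖e‖²` comparable, up to the noise term `‖𝒜*(e)‖`, to the squared distance
`‖ℋ(z) − X₀‖_F²`. Hence on `𝒩_ε` the sublevel set `𝒩_F̃` lies strictly inside `𝒩_ε`, while the
regularizer forces it into `𝒩_d ∩ 𝒩_μ`. Along the segment from an iterate to the next one `F̃`
decreases as long as the segment stays in `𝒩_ε ∩ 𝒩_F̃`, because there the gradient is Lipschitz;
a continuation argument shows that the segment never leaves this set, although it is not convex.
The regularity condition is a Polyak–Łojasiewicz inequality for the excess `F̃ − c`, which therefore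
decays by the factor `1 − ηω` at every step, and the lower RIP bound turns this decay into one of
the distance.

The Wirtinger gradient is half the gradient for the real inner product, so a Wirtinger step of
length `η` is a gradient step of length `η / 2`.
-/

/-! ### Gradient descent inside a region that the level set cannot leave -/

section GradientDescent

open scoped Topology

variable {E : Type*} [NormedAddCommGroup E] [InnerProductSpace ℝ E]

lemma Icc_subset_of_forall_Icc_subset {A : Set ℝ} {a b : ℝ} (hA : IsClosed A) (ha : a ∈ A)
    (hstep : ∀ t ∈ Set.Ico a b, Set.Icc a t ⊆ A → A ∈ 𝓝[>] t) :
    Set.Icc a b ⊆ A := by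
  have Icc_of_Ico {t : ℝ} (ht : Set.Ico a t ⊆ A) : Set.Icc a t ⊆ A := by
    rcases eq_or_ne a t with rfl | hne
    · simpa using ha
    · simpa only [closure_Ico hne] using hA.closure_subset_iff.2 ht
  have hclosed : IsClosed {t | Set.Ico a t ⊆ A} := by
    have : {t | Set.Ico a t ⊆ A} = ⋂ u ∈ Set.Ici a \ A, Set.Iic u := by
      ext t
      simp only [Set.mem_ofPred_eq, Set.mem_iInter, Set.mem_Iic, Set.mem_sdiff, Set.mem_Ici]
      exact ⟨fun h u hu => not_lt.1 fun hut => hu.2 (h ⟨hu.1, hut⟩),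
        fun h u hu => by_contra fun huA => (h u ⟨hu.1, huA⟩).not_gt hu.2⟩
    exact this ▸ isClosed_biInter fun u _ => isClosed_Iic
  have hall : Set.Icc a b ⊆ {t | Set.Ico a t ⊆ A} := by
    refine (hclosed.inter isClosed_Icc).Icc_subset_of_forall_mem_nhdsWithin (by simp) ?_
    rintro t ⟨ht, htb⟩
    obtain ⟨r, hr, hsub⟩ := mem_nhdsGT_iff_exists_Ioo_subset.1 (hstep t htb (Icc_of_Ico ht))
    refine mem_nhdsGT_iff_exists_Ioo_subset.2 ⟨r, hr, fun y hy u hu => ?_⟩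
    rcases le_or_gt u t with hut | htu
    · exact Icc_of_Ico ht ⟨hu.1, hut⟩
    · exact hsub ⟨htu, hu.2.trans hy.2⟩
  rcases le_or_gt a b with hab | hab
  · exact Icc_of_Ico (hall ⟨hab, le_rfl⟩)
  · simp [Set.Icc_eq_empty_of_lt hab]

lemma eventually_nhdsGT_lt_of_hasDerivAt_neg {φ : ℝ → ℝ} {φ' t : ℝ} (hφ : HasDerivAt φ φ' t)
    (hneg : φ' < 0) : ∀ᶠ σ in 𝓝[>] t, φ σ < φ t := by
  have hslope : ∀ᶠ σ in 𝓝[>] t, slope φ t σ < 0 :=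
    ((hasDerivAt_iff_tendsto_slope.1 hφ).mono_left
      (nhdsWithin_mono _ fun σ hσ => ne_of_gt hσ)).eventually (gt_mem_nhds hneg)
  filter_upwards [hslope, self_mem_nhdsWithin] with σ hσ htσ
  rwa [slope_def_field, div_lt_iff₀ (sub_pos.2 htσ), zero_mul, sub_neg] at hσ

lemma segment_add_smul_eq_image (x w : E) {t : ℝ} (ht : 0 ≤ t) :
    segment ℝ x (x + t • w) = (fun σ : ℝ => x + σ • w) '' Set.Icc 0 t := by
  have hline : (fun σ : ℝ => x + σ • w) = AffineMap.lineMap x (x + w) := by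
    ext σ
    simp [AffineMap.lineMap_apply, add_comm]
  rw [← segment_eq_Icc ht, hline, image_segment]
  simp [AffineMap.lineMap_apply, add_comm]

/-- The setting of a local descent argument: `G` is the gradient of `f`, the region `C` cannot be
left from inside the sublevel set `{f ≤ M}`, and `G` is `Λ`-Lipschitz along segments in
`C ∩ {f ≤ M}`. Neither `C` nor `C ∩ {f ≤ M}` is assumed convex. -/
structure IsDescentRegion (f : E → ℝ) (G : E → E) (C : Set E) (M Λ : ℝ) : Prop where
  isClosed : IsClosed C
  hasLineDerivAt : ∀ x w, HasLineDerivAt ℝ f (inner ℝ (G x) w) x w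
  subset_interior : C ∩ {x | f x ≤ M} ⊆ interior C
  norm_sub_le : ∀ x y, segment ℝ x y ⊆ C ∩ {z | f z ≤ M} → ‖G y - G x‖ ≤ Λ * ‖y - x‖

lemma hasDerivAt_comp_line {f : E → ℝ} {G : E → E}
    (hf : ∀ x w, HasLineDerivAt ℝ f (inner ℝ (G x) w) x w) (x w : E) (t : ℝ) :
    HasDerivAt (fun σ : ℝ => f (x + σ • w)) (inner ℝ (G (x + t • w)) w) t := by
  have h := hf (x + t • w) w
  rw [HasLineDerivAt, ← sub_self t] at h
  refine (HasDerivAt.comp_sub_const t t h).congr_of_eventuallyEq (.of_forall fun σ => ?_)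
  simp [add_assoc, ← add_smul]

namespace IsDescentRegion

variable {f : E → ℝ} {G : E → E} {C : Set E} {M Λ τ : ℝ} {x : E}

lemma inner_gradient_le (hR : IsDescentRegion f G C M Λ) (hτ : 0 ≤ τ) (hτΛ : τ * Λ ≤ 1) {t : ℝ}
    (ht : 0 ≤ t) (hseg : segment ℝ x (x + t • -(τ • G x)) ⊆ C ∩ {z | f z ≤ M}) :
    inner ℝ (G (x + t • -(τ • G x))) (-(τ • G x)) ≤ -(τ * (1 - t) * ‖G x‖ ^ 2) := by
  set w := -(τ • G x) with hw
  have hnorm : ‖w‖ = τ * ‖G x‖ := by rw [hw, norm_neg, norm_smul, Real.norm_of_nonneg hτ]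
  have hGw : inner ℝ (G x) w = -(τ * ‖G x‖ ^ 2) := by
    rw [hw, inner_neg_right, inner_smul_right, real_inner_self_eq_norm_sq]
  have hlip : ‖G (x + t • w) - G x‖ ≤ Λ * (t * ‖w‖) := by
    simpa [norm_smul, abs_of_nonneg ht] using hR.norm_sub_le _ _ hseg
  have hτΛ' : τ * Λ * (t * τ * ‖G x‖ ^ 2) ≤ 1 * (t * τ * ‖G x‖ ^ 2) := by gcongr
  calc inner ℝ (G (x + t • w)) w
      = inner ℝ (G x) w + inner ℝ (G (x + t • w) - G x) w := by rw [inner_sub_left]; ring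
    _ ≤ -(τ * ‖G x‖ ^ 2) + Λ * (t * ‖w‖) * ‖w‖ := by
        rw [hGw]
        gcongr
        exact (real_inner_le_norm _ _).trans (by gcongr)
    _ ≤ -(τ * (1 - t) * ‖G x‖ ^ 2) := by rw [hnorm]; linarith

lemma segment_subset (hR : IsDescentRegion f G C M Λ) (hτ : 0 ≤ τ) (hτΛ : τ * Λ ≤ 1)
    (hx : x ∈ C ∩ {z | f z ≤ M}) {t : ℝ} (ht : t ∈ Set.Icc (0 : ℝ) 1) :
    segment ℝ x (x + t • -(τ • G x)) ⊆ C ∩ {z | f z ≤ M} := by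
  set w := -(τ • G x) with hw
  have hline := hasDerivAt_comp_line hR.hasLineDerivAt x w
  have hcont : Continuous fun t : ℝ => x + t • w := by fun_prop
  have hclosed : IsClosed {t : ℝ | x + t • w ∈ C ∩ {z | f z ≤ M}} :=
    (hR.isClosed.preimage hcont).inter
      (isClosed_le (continuous_iff_continuousAt.2 fun t => (hline t).continuousAt)
        continuous_const)
  suffices Set.Icc (0 : ℝ) 1 ⊆ {t : ℝ | x + t • w ∈ C ∩ {z | f z ≤ M}} by
    rw [segment_add_smul_eq_image x w ht.1, Set.image_subset_iff]
    exact (Set.Icc_subset_Icc_right ht.2).trans this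
  refine Icc_subset_of_forall_Icc_subset hclosed (by simpa using hx) fun T hT hsub => ?_
  rcases eq_or_ne w 0 with hw0 | hw0
  · exact Filter.mem_of_superset Filter.univ_mem fun σ _ => by simpa [hw0] using hx
  have hslope : inner ℝ (G (x + T • w)) w < 0 := by
    have hneg := hR.inner_gradient_le hτ hτΛ hT.1
      (by rwa [segment_add_smul_eq_image x _ hT.1, Set.image_subset_iff])
    have : 0 < τ * (1 - T) * ‖G x‖ ^ 2 := by
      have hG : τ ≠ 0 ∧ G x ≠ 0 := by simpa [hw] using hw0
      have := sub_pos.2 hT.2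
      have := norm_pos_iff.2 hG.2
      have := hτ.lt_of_ne' hG.1
      positivity
    linarith
  have hTR : x + T • w ∈ C ∩ {z | f z ≤ M} := hsub (Set.right_mem_Icc.2 hT.1)
  have hC : ∀ᶠ σ in 𝓝[>] T, x + σ • w ∈ C :=
    nhdsWithin_le_nhds (hcont.continuousAt.eventually_mem
      (mem_interior_iff_mem_nhds.1 (hR.subset_interior hTR)))
  filter_upwards [hC, eventually_nhdsGT_lt_of_hasDerivAt_neg (hline T) hslope] with σ hσC hσ
  exact ⟨hσC, hσ.le.trans hTR.2⟩

lemma sub_smul_mem (hR : IsDescentRegion f G C M Λ) (hτ : 0 ≤ τ) (hτΛ : τ * Λ ≤ 1)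
    (hx : x ∈ C ∩ {z | f z ≤ M}) : x - τ • G x ∈ C ∩ {z | f z ≤ M} := by
  have h := hR.segment_subset hτ hτΛ hx (t := 1) (by simp) (right_mem_segment ..)
  rwa [one_smul, ← sub_eq_add_neg] at h

lemma apply_sub_smul_le (hR : IsDescentRegion f G C M Λ) (hτ : 0 ≤ τ) (hτΛ : τ * Λ ≤ 1)
    (hx : x ∈ C ∩ {z | f z ≤ M}) : f (x - τ • G x) ≤ f x - τ / 2 * ‖G x‖ ^ 2 := by
  set w := -(τ • G x) with hw
  set c := τ * ‖G x‖ ^ 2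
  have hderiv : ∀ t, HasDerivAt (fun t : ℝ => f (x + t • w) + c * (t - t ^ 2 / 2))
      (inner ℝ (G (x + t • w)) w + c * (1 - t)) t := fun t => by
    refine ((hasDerivAt_comp_line hR.hasLineDerivAt x w t).add
      (((hasDerivAt_id t).sub (((hasDerivAt_id t).pow 2).div_const 2)).const_mul c)).congr_deriv ?_
    simp
  have hanti : AntitoneOn (fun t : ℝ => f (x + t • w) + c * (t - t ^ 2 / 2)) (Set.Icc 0 1) := by
    refine antitoneOn_of_hasDerivWithinAt_nonpos (convex_Icc 0 1)
      (fun t _ => (hderiv t).continuousAt.continuousWithinAt)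
      (fun t _ => (hderiv t).hasDerivWithinAt) fun t ht => ?_
    rw [interior_Icc] at ht
    have := hR.inner_gradient_le hτ hτΛ ht.1.le
      (hR.segment_subset hτ hτΛ hx (Set.Ioo_subset_Icc_self ht))
    linarith
  have h01 := hanti (Set.left_mem_Icc.2 zero_le_one) (Set.right_mem_Icc.2 zero_le_one) zero_le_one
  norm_num [hw, ← sub_eq_add_neg] at h01
  linarith

theorem linear_convergence (hR : IsDescentRegion f G C M Λ) (hτ : 0 ≤ τ) (hτΛ : τ * Λ ≤ 1)
    {m c : ℝ} (hτm : τ * m ≤ 1)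
    (hPL : ∀ x ∈ C ∩ {z | f z ≤ M}, 2 * m * max (f x - c) 0 ≤ ‖G x‖ ^ 2)
    {z : ℕ → E} (hz0 : z 0 ∈ C ∩ {z | f z ≤ M}) (hz : ∀ t, z (t + 1) = z t - τ • G (z t))
    (t : ℕ) :
    z t ∈ C ∩ {z | f z ≤ M} ∧
      max (f (z t) - c) 0 ≤ (1 - τ * m) ^ t * max (f (z 0) - c) 0 := by
  induction t with
  | zero => simpa using hz0
  | succ t ih =>
    obtain ⟨hmem, hle⟩ := ih
    refine ⟨hz t ▸ hR.sub_smul_mem hτ hτΛ hmem, ?_⟩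
    have hdescent := hR.apply_sub_smul_le hτ hτΛ hmem
    rw [← hz] at hdescent
    have hstep : f (z (t + 1)) - c ≤ (1 - τ * m) * max (f (z t) - c) 0 := by
      have := mul_le_mul_of_nonneg_left (hPL _ hmem) (by positivity : 0 ≤ τ / 2)
      linarith [le_max_left (f (z t) - c) 0]
    calc max (f (z (t + 1)) - c) 0
        ≤ (1 - τ * m) * max (f (z t) - c) 0 :=
          max_le hstep (mul_nonneg (sub_nonneg.2 hτm) (le_max_right _ _))
      _ ≤ (1 - τ * m) * ((1 - τ * m) ^ t * max (f (z 0) - c) 0) :=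
          mul_le_mul_of_nonneg_left hle (sub_nonneg.2 hτm)
      _ = (1 - τ * m) ^ (t + 1) * max (f (z 0) - c) 0 := by ring

end IsDescentRegion

end GradientDescent

/-! ### Euclidean and Frobenius norms -/

section Norms

variable {K N n s : ℕ}

lemma vnormSq_nonneg (v : Fin n → ℂ) : 0 ≤ vnormSq v := sum_nonneg fun _ _ => sq_nonneg _

lemma vnorm_nonneg (v : Fin n → ℂ) : 0 ≤ vnorm v := Real.sqrt_nonneg _

lemma vnorm_sq (v : Fin n → ℂ) : vnorm v ^ 2 = vnormSq v := Real.sq_sqrt (vnormSq_nonneg v)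

lemma frobSq_nonneg (Z : Matrix (Fin K) (Fin N) ℂ) : 0 ≤ frobSq Z :=
  sum_nonneg fun _ _ => sum_nonneg fun _ _ => sq_nonneg _

lemma frob_nonneg (Z : Matrix (Fin K) (Fin N) ℂ) : 0 ≤ frob Z := Real.sqrt_nonneg _

lemma frob_sq (Z : Matrix (Fin K) (Fin N) ℂ) : frob Z ^ 2 = frobSq Z :=
  Real.sq_sqrt (frobSq_nonneg Z)

lemma famFrob_nonneg (Z : Fin s → Matrix (Fin K) (Fin N) ℂ) : 0 ≤ famFrob Z := Real.sqrt_nonneg _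

lemma famFrob_sq (Z : Fin s → Matrix (Fin K) (Fin N) ℂ) : famFrob Z ^ 2 = famFrobSq Z :=
  Real.sq_sqrt (sum_nonneg fun _ _ => frobSq_nonneg _)

lemma frob_le_famFrob (Z : Fin s → Matrix (Fin K) (Fin N) ℂ) (i : Fin s) :
    frob (Z i) ≤ famFrob Z :=
  Real.sqrt_le_sqrt (single_le_sum (f := fun i => frobSq (Z i)) (fun _ _ => frobSq_nonneg _)
    (mem_univ i))

lemma sum_frob_le (Z : Fin s → Matrix (Fin K) (Fin N) ℂ) :
    ∑ i, frob (Z i) ≤ Real.sqrt s * famFrob Z := by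
  have := Real.sum_mul_le_sqrt_mul_sqrt univ (fun _ : Fin s => (1 : ℝ)) (fun i => frob (Z i))
  simpa [frob_sq, famFrob, famFrobSq] using this

lemma vnorm_eq_norm (v : Fin n → ℂ) : vnorm v = ‖WithLp.toLp 2 v‖ := by
  rw [EuclideanSpace.norm_eq]
  rfl

lemma vinner_eq_inner (u v : Fin n → ℂ) :
    vinner u v = inner ℂ (WithLp.toLp 2 u) (WithLp.toLp 2 v) := by
  simp [vinner, PiLp.inner_apply, mul_comm]

lemma norm_vinner_le (u v : Fin n → ℂ) : ‖vinner u v‖ ≤ vnorm u * vnorm v := by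
  rw [vinner_eq_inner, vnorm_eq_norm, vnorm_eq_norm]
  exact norm_inner_le_norm _ _

lemma vinner_self (v : Fin n → ℂ) : vinner v v = (vnormSq v : ℂ) := by
  simp [vinner, vnormSq, Complex.conj_mul']

lemma conj_vinner (u v : Fin n → ℂ) : conj (vinner u v) = vinner v u := by
  simp [vinner, mul_comm]

lemma vinner_add_right (u v w : Fin n → ℂ) :
    vinner u (fun k => v k + w k) = vinner u v + vinner u w := by
  simp [vinner, mul_add, sum_add_distrib]

lemma vinner_sub_right (u v w : Fin n → ℂ) :
    vinner u (fun k => v k - w k) = vinner u v - vinner u w := by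
  simp [vinner, mul_sub, sum_sub_distrib]

lemma vinner_mul_right (u v : Fin n → ℂ) (c : ℂ) :
    vinner u (fun k => c * v k) = c * vinner u v := by
  simp only [vinner, mul_sum, mul_left_comm]

lemma vinner_sum_right {m : ℕ} (u : Fin n → ℂ) (v : Fin m → Fin n → ℂ) :
    vinner u (fun k => ∑ l, v l k) = ∑ l, vinner u (v l) := by
  simp only [vinner, mul_sum]
  exact sum_comm

lemma vnormSq_sub (v w : Fin n → ℂ) :
    vnormSq (fun k => v k - w k) = vnormSq v - 2 * (vinner v w).re + vnormSq w := by
  simp only [← vnorm_sq, vnorm_eq_norm, vinner_eq_inner]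
  exact norm_sub_sq (𝕜 := ℂ) (WithLp.toLp 2 v) (WithLp.toLp 2 w)

lemma vinner_sub_proj_eq_zero (u v : Fin n → ℂ) :
    vinner u (fun k => v k - vinner u v / vnormSq u * u k) = 0 := by
  rcases eq_or_ne (vnormSq u) 0 with hu | hu
  · refine norm_le_zero_iff.1 ((norm_vinner_le _ _).trans_eq ?_)
    rw [vnorm, hu, Real.sqrt_zero, zero_mul]
  · rw [vinner_sub_right, vinner_mul_right, vinner_self,
      div_mul_cancel₀ _ (Complex.ofReal_ne_zero.2 hu), sub_self]

lemma vinner_conjTranspose_mulVec (M : Matrix (Fin K) (Fin N) ℂ) (u : Fin K → ℂ)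
    (v : Fin N → ℂ) : vinner v (M.conjTranspose.mulVec u) = conj (vinner u (M.mulVec v)) := by
  simp only [vinner, Matrix.mulVec, dotProduct, Matrix.conjTranspose_apply, map_sum, map_mul,
    Complex.conj_conj, mul_sum, RCLike.star_def]
  rw [sum_comm]
  exact sum_congr rfl fun _ _ => sum_congr rfl fun _ _ => by ring

lemma finner_add_left (U V M : Matrix (Fin K) (Fin N) ℂ) :
    finner (U + V) M = finner U M + finner V M := by
  simp [finner, add_mul, sum_add_distrib]

lemma finner_add_right (U V M : Matrix (Fin K) (Fin N) ℂ) :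
    finner M (U + V) = finner M U + finner M V := by
  simp [finner, mul_add, sum_add_distrib]

lemma finner_self (U : Matrix (Fin K) (Fin N) ℂ) : finner U U = (frobSq U : ℂ) := by
  simp [finner, frobSq, Complex.conj_mul']

lemma finner_rankOne (u : Fin K → ℂ) (v : Fin N → ℂ) (M : Matrix (Fin K) (Fin N) ℂ) :
    finner (rankOne u v) M = vinner u (M.mulVec v) := by
  simp only [finner, rankOne, vinner, Matrix.mulVec, dotProduct, Matrix.of_apply, mul_sum,
    map_mul, Complex.conj_conj]
  exact sum_congr rfl fun _ _ => sum_congr rfl fun _ _ => by ring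

lemma rankOne_mulVec (u : Fin K → ℂ) (v w : Fin N → ℂ) :
    (rankOne u v).mulVec w = fun k => vinner v w * u k := by
  funext k
  simp only [rankOne, vinner, Matrix.mulVec, dotProduct, Matrix.of_apply, sum_mul]
  exact sum_congr rfl fun _ _ => by ring

lemma frobSq_rankOne_add_rankOne {u u' : Fin K → ℂ} (v v' : Fin N → ℂ) (huu' : vinner u u' = 0) :
    frobSq (rankOne u v + rankOne u' v') = vnormSq u * vnormSq v + vnormSq u' * vnormSq v' := by
  have hu'u : vinner u' u = 0 := by rw [← conj_vinner, huu', map_zero]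
  have h := finner_self (rankOne u v + rankOne u' v')
  simp only [finner_add_left, finner_add_right, finner_rankOne, rankOne_mulVec, vinner_mul_right,
    huu', hu'u, vinner_self, mul_zero, add_zero, zero_add] at h
  apply Complex.ofReal_injective
  rw [← h]
  push_cast
  ring

open scoped Matrix.Norms.L2Operator in
lemma opNorm_eq_norm (Z : Matrix (Fin K) (Fin N) ℂ) : opNorm Z = ‖Z‖ := by
  rw [Matrix.l2_opNorm_def, ← ContinuousLinearMap.sSup_unitClosedBall_eq_norm, opNorm]
  congr 1
  ext r
  simp only [Set.mem_image, Metric.mem_closedBall, dist_zero_right, Set.mem_ofPred_eq,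
    vnorm_eq_norm]
  constructor
  · rintro ⟨v, hv, rfl⟩
    exact ⟨WithLp.toLp 2 v, hv, rfl⟩
  · rintro ⟨v, hv, rfl⟩
    exact ⟨v.ofLp, hv, rfl⟩

open scoped Matrix.Norms.L2Operator in
lemma opNorm_nonneg (Z : Matrix (Fin K) (Fin N) ℂ) : 0 ≤ opNorm Z := by
  rw [opNorm_eq_norm]
  exact norm_nonneg Z

open scoped Matrix.Norms.L2Operator in
lemma vnorm_mulVec_le (Z : Matrix (Fin K) (Fin N) ℂ) (v : Fin N → ℂ) :
    vnorm (Z.mulVec v) ≤ opNorm Z * vnorm v := by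
  rw [vnorm_eq_norm, opNorm_eq_norm, vnorm_eq_norm]
  exact Z.l2_opNorm_mulVec (WithLp.toLp 2 v)

lemma norm_finner_rankOne_le (M : Matrix (Fin K) (Fin N) ℂ) (u : Fin K → ℂ) (v : Fin N → ℂ) :
    ‖finner (rankOne u v) M‖ ≤ opNorm M * (vnorm u * vnorm v) := by
  calc ‖finner (rankOne u v) M‖ ≤ vnorm u * vnorm (M.mulVec v) := by
        rw [finner_rankOne]
        exact norm_vinner_le u (M.mulVec v)
    _ ≤ vnorm u * (opNorm M * vnorm v) :=
        mul_le_mul_of_nonneg_left (vnorm_mulVec_le M v) (vnorm_nonneg u)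
    _ = opNorm M * (vnorm u * vnorm v) := mul_left_comm _ _ _

/-- A difference of two rank-one matrices is a sum of two rank-one matrices with orthogonal column
spaces, so its nuclear norm is at most `√2` times its Frobenius norm. -/
lemma norm_finner_rankOne_sub_le (M : Matrix (Fin K) (Fin N) ℂ) (h h₀ : Fin K → ℂ)
    (x x₀ : Fin N → ℂ) :
    ‖finner (rankOne h x - rankOne h₀ x₀) M‖
      ≤ Real.sqrt 2 * opNorm M * frob (rankOne h x - rankOne h₀ x₀) := by
  set c : ℂ := vinner h₀ h / vnormSq h₀
  set p : Fin K → ℂ := fun k => h k - c * h₀ k with hp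
  set w : Fin N → ℂ := fun j => conj c * x j - x₀ j with hw
  have hdecomp : rankOne h x - rankOne h₀ x₀ = rankOne h₀ w + rankOne p x := by
    ext k j
    simp only [rankOne, Matrix.sub_apply, Matrix.add_apply, Matrix.of_apply, hp, hw, map_sub,
      map_mul, Complex.conj_conj]
    ring
  have horth : vinner h₀ p = 0 := vinner_sub_proj_eq_zero h₀ h
  have hpyth : frob (rankOne h x - rankOne h₀ x₀) ^ 2
      = (vnorm h₀ * vnorm w) ^ 2 + (vnorm p * vnorm x) ^ 2 := by
    rw [frob_sq, hdecomp, frobSq_rankOne_add_rankOne _ _ horth]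
    simp only [mul_pow, vnorm_sq]
  have hnuclear : vnorm h₀ * vnorm w + vnorm p * vnorm x
      ≤ Real.sqrt 2 * frob (rankOne h x - rankOne h₀ x₀) := by
    refine le_of_sq_le_sq ?_ (mul_nonneg (Real.sqrt_nonneg 2) (frob_nonneg _))
    rw [mul_pow, hpyth, Real.sq_sqrt zero_le_two]
    exact add_sq_le
  calc ‖finner (rankOne h x - rankOne h₀ x₀) M‖
      ≤ ‖finner (rankOne h₀ w) M‖ + ‖finner (rankOne p x) M‖ := by
        rw [hdecomp, finner_add_left]
        exact norm_add_le _ _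
    _ ≤ opNorm M * (vnorm h₀ * vnorm w + vnorm p * vnorm x) := by
        rw [mul_add]
        exact add_le_add (norm_finner_rankOne_le _ _ _) (norm_finner_rankOne_le _ _ _)
    _ ≤ opNorm M * (Real.sqrt 2 * frob (rankOne h x - rankOne h₀ x₀)) :=
        mul_le_mul_of_nonneg_left hnuclear (opNorm_nonneg M)
    _ = _ := by ring

end Norms

/-! ### The measurement operator -/

section Measurement

variable {K N L s : ℕ} (b : Fin L → Fin K → ℂ) (a : Fin s → Fin L → Fin N → ℂ)

lemma AadjNorm_nonneg (e : Fin L → ℂ) : 0 ≤ AadjNorm b a e :=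
  Real.iSup_nonneg fun _ => opNorm_nonneg _

lemma opNorm_calAdj_le (e : Fin L → ℂ) (i : Fin s) : opNorm (calAdj b (a i) e) ≤ AadjNorm b a e :=
  le_ciSup (f := fun i => opNorm (calAdj b (a i) e)) (Set.finite_range _).bddAbove i

lemma vinner_calAi (a : Fin L → Fin N → ℂ) (Z : Matrix (Fin K) (Fin N) ℂ) (z : Fin L → ℂ) :
    vinner (calAi b a Z) z = finner Z (calAdj b a z) := by
  simp only [vinner, calAi, finner, calAdj, Matrix.mulVec, dotProduct, Matrix.of_apply,
    mul_sum, sum_mul, map_sum, map_mul, Complex.conj_conj]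
  rw [sum_comm]
  refine sum_congr rfl fun k _ => ?_
  rw [sum_comm]
  exact sum_congr rfl fun j _ => sum_congr rfl fun l _ => by ring

lemma vinner_calA (Z : Fin s → Matrix (Fin K) (Fin N) ℂ) (z : Fin L → ℂ) :
    vinner (calA b a Z) z = ∑ i, finner (Z i) (calAdj b (a i) z) := by
  simp only [← vinner_calAi, vinner, calA, map_sum, sum_mul]
  exact sum_comm

lemma calA_sub (Z W : Fin s → Matrix (Fin K) (Fin N) ℂ) (l : Fin L) :
    calA b a (fun i => Z i - W i) l = calA b a Z l - calA b a W l := by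
  simp only [calA, calAi, ← sum_sub_distrib, Matrix.sub_mulVec, ← vinner_sub_right]
  rfl

variable (h₀ h : Fin s → Fin K → ℂ) (x₀ x : Fin s → Fin N → ℂ) (e : Fin L → ℂ)

lemma Fobj_eq :
    Fobj b a h₀ x₀ e h x = vnormSq (calA b a fun i => Hmap h x i - Hmap h₀ x₀ i)
      - 2 * (vinner (calA b a fun i => Hmap h x i - Hmap h₀ x₀ i) e).re + vnormSq e := by
  rw [← vnormSq_sub, Fobj]
  congr 1
  funext l
  rw [calA_sub, yvec]
  ring

lemma abs_re_vinner_calA_le :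
    |(vinner (calA b a fun i => Hmap h x i - Hmap h₀ x₀ i) e).re|
      ≤ Real.sqrt 2 * (Real.sqrt s * AadjNorm b a e)
          * famFrob (fun i => Hmap h x i - Hmap h₀ x₀ i) := by
  have hblock : ∀ i, ‖finner (Hmap h x i - Hmap h₀ x₀ i) (calAdj b (a i) e)‖
      ≤ Real.sqrt 2 * AadjNorm b a e * frob (Hmap h x i - Hmap h₀ x₀ i) := fun i =>
    (norm_finner_rankOne_sub_le _ _ _ _ _).trans <| mul_le_mul_of_nonneg_right
      (mul_le_mul_of_nonneg_left (opNorm_calAdj_le b a e i) (Real.sqrt_nonneg 2)) (frob_nonneg _)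
  have hA := AadjNorm_nonneg b a e
  calc |(vinner (calA b a fun i => Hmap h x i - Hmap h₀ x₀ i) e).re|
      ≤ ∑ i, ‖finner (Hmap h x i - Hmap h₀ x₀ i) (calAdj b (a i) e)‖ := by
        rw [vinner_calA]
        exact (Complex.abs_re_le_norm _).trans (norm_sum_le _ _)
    _ ≤ Real.sqrt 2 * AadjNorm b a e * ∑ i, frob (Hmap h x i - Hmap h₀ x₀ i) := by
        rw [mul_sum]
        exact sum_le_sum fun i _ => hblock i
    _ ≤ Real.sqrt 2 * AadjNorm b a e
          * (Real.sqrt s * famFrob (fun i => Hmap h x i - Hmap h₀ x₀ i)) := by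
        gcongr
        exact sum_frob_le fun i => Hmap h x i - Hmap h₀ x₀ i
    _ = _ := by ring

end Measurement

/-! ### The Wirtinger gradient as a derivative along curves -/

section Gradient

variable {K N L n s : ℕ}

lemma hasDerivAt_vinner_right (c : Fin n → ℂ) {f : ℝ → Fin n → ℂ} {f' : Fin n → ℂ} {t : ℝ}
    (hf : HasDerivAt f f' t) : HasDerivAt (fun τ => vinner c (f τ)) (vinner c f') t :=
  HasDerivAt.fun_sum fun k _ => (hasDerivAt_pi.1 hf k).const_mul (conj (c k))

lemma hasDerivAt_norm_sq {f : ℝ → ℂ} {f' : ℂ} {t : ℝ} (hf : HasDerivAt f f' t) :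
    HasDerivAt (fun τ => ‖f τ‖ ^ 2) (2 * (conj f' * f t).re) t := by
  refine hf.norm_sq.congr_deriv ?_
  rw [real_inner_comm, Complex.inner, mul_comm (conj f')]

lemma hasDerivAt_vnormSq {f : ℝ → Fin n → ℂ} {f' : Fin n → ℂ} {t : ℝ} (hf : HasDerivAt f f' t) :
    HasDerivAt (fun τ => vnormSq (f τ)) (2 * (vinner f' (f t)).re) t := by
  refine (HasDerivAt.fun_sum fun k _ =>
    hasDerivAt_norm_sq (hasDerivAt_pi.1 hf k)).congr_deriv ?_
  rw [vinner, Complex.re_sum, mul_sum]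

lemma hasDerivAt_max_zero_sq (z : ℝ) : HasDerivAt (fun y : ℝ => max y 0 ^ 2) (2 * max z 0) z := by
  rcases lt_trichotomy z 0 with hz | rfl | hz
  · rw [max_eq_right hz.le, mul_zero]
    refine (hasDerivAt_const z (0 : ℝ)).congr_of_eventuallyEq ?_
    filter_upwards [gt_mem_nhds hz] with y hy
    rw [max_eq_right hy.le, zero_pow two_ne_zero]
  · have hO : (fun y : ℝ => max y 0 ^ 2) =O[nhds 0] fun y => ‖y - 0‖ ^ 2 :=
      .of_bound' <| .of_forall fun y => by
        simpa [abs_of_nonneg (le_max_right y 0)] using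
          pow_le_pow_left₀ (le_max_right y 0) (max_le (le_abs_self y) (abs_nonneg y)) 2
    simpa using (hO.hasFDerivAt one_lt_two).hasDerivAt
  · rw [max_eq_left hz.le]
    refine (hasDerivAt_pow 2 z).congr_of_eventuallyEq ?_ |>.congr_deriv (by norm_num)
    filter_upwards [lt_mem_nhds hz] with y hy
    rw [max_eq_left hy.le]

lemma hasDerivAt_G0 (z : ℝ) : HasDerivAt G0 (G0' z) z :=
  (hasDerivAt_max_zero_sq (z - 1)).comp_sub_const z 1

variable (b : Fin L → Fin K → ℂ) (a : Fin s → Fin L → Fin N → ℂ) (h₀ : Fin s → Fin K → ℂ)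
  (x₀ : Fin s → Fin N → ℂ) (e : Fin L → ℂ) (ρ μ : ℝ) (dd : Fin s → ℝ)
  {h : ℝ → Fin s → Fin K → ℂ} {x : ℝ → Fin s → Fin N → ℂ} {h' : Fin s → Fin K → ℂ}
  {x' : Fin s → Fin N → ℂ} {t : ℝ}

lemma hasDerivAt_rankOne {u : ℝ → Fin K → ℂ} {v : ℝ → Fin N → ℂ} {u' : Fin K → ℂ}
    {v' : Fin N → ℂ} (hu : HasDerivAt u u' t) (hv : HasDerivAt v v' t) (k : Fin K) (j : Fin N) :
    HasDerivAt (fun τ => rankOne (u τ) (v τ) k j) ((rankOne u' (v t) + rankOne (u t) v') k j) t :=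
  (hasDerivAt_pi.1 hu k).mul (hasDerivAt_pi.1 hv j).star

lemma hasDerivAt_calA {Z : ℝ → Fin s → Matrix (Fin K) (Fin N) ℂ}
    {Z' : Fin s → Matrix (Fin K) (Fin N) ℂ}
    (hZ : ∀ i k j, HasDerivAt (fun τ => Z τ i k j) (Z' i k j) t) :
    HasDerivAt (fun τ => calA b a (Z τ)) (calA b a Z') t :=
  hasDerivAt_pi.2 fun l => HasDerivAt.fun_sum fun i _ => hasDerivAt_vinner_right (b l) <|
    hasDerivAt_pi.2 fun k => HasDerivAt.fun_sum (u := univ) fun j _ =>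
      (hZ i k j).mul_const (a i l j)

lemma hasDerivAt_Fobj (hh : HasDerivAt h h' t) (hx : HasDerivAt x x' t) :
    HasDerivAt (fun τ => Fobj b a h₀ x₀ e (h τ) (x τ))
      (2 * (∑ i, (vinner (h' i) (gradFh b a h₀ x₀ e (h t) (x t) i)).re
        + ∑ i, (vinner (x' i) (gradFx b a h₀ x₀ e (h t) (x t) i)).re)) t := by
  have hres : HasDerivAt (fun τ => residual b a h₀ x₀ e (h τ) (x τ))
      (calA b a fun i => rankOne (h' i) (x t i) + rankOne (h t i) (x' i)) t :=
    (hasDerivAt_calA b a fun i =>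
      hasDerivAt_rankOne (hasDerivAt_pi.1 hh i) (hasDerivAt_pi.1 hx i)).sub_const
        (yvec b a h₀ x₀ e)
  refine (hasDerivAt_vnormSq hres).congr_deriv ?_
  simp only [vinner_calA, finner_add_left, finner_rankOne, Complex.re_sum, Complex.add_re,
    sum_add_distrib, gradFh, gradFx, vinner_conjTranspose_mulVec, Complex.conj_re]

lemma re_vinner_gradGh (u : Fin K → ℂ) (h : Fin s → Fin K → ℂ) (i : Fin s) :
    (vinner u (gradGh b ρ μ dd h i)).re = ρ / (2 * dd i) *
      (G0' (vnormSq (h i) / (2 * dd i)) * (vinner u (h i)).re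
        + L / (4 * μ ^ 2) * ∑ l, G0' (L * ‖vinner (b l) (h i)‖ ^ 2 / (8 * dd i * μ ^ 2))
          * (conj (vinner (b l) u) * vinner (b l) (h i)).re) := by
  unfold gradGh
  simp only [vinner_mul_right, vinner_add_right, vinner_sum_right, conj_vinner,
    Complex.re_ofReal_mul, Complex.add_re, Complex.re_sum,
    mul_comm (vinner u (b _)) (vinner (b _) (h i))]

lemma re_vinner_gradGx (v : Fin N → ℂ) (x : Fin s → Fin N → ℂ) (i : Fin s) :
    (vinner v (gradGx ρ dd x i)).re
      = ρ / (2 * dd i) * (G0' (vnormSq (x i) / (2 * dd i)) * (vinner v (x i)).re) := by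
  unfold gradGx
  simp only [vinner_mul_right, Complex.re_ofReal_mul]

lemma hasDerivAt_G0_vnormSq {f : ℝ → Fin n → ℂ} {f' : Fin n → ℂ} (c : ℝ)
    (hf : HasDerivAt f f' t) :
    HasDerivAt (fun τ => G0 (vnormSq (f τ) / c))
      (2 * (1 / c * (G0' (vnormSq (f t) / c) * (vinner f' (f t)).re))) t :=
  ((hasDerivAt_G0 _).comp t ((hasDerivAt_vnormSq hf).div_const c)).congr_deriv (by ring)

lemma hasDerivAt_Greg (hh : HasDerivAt h h' t) (hx : HasDerivAt x x' t) :
    HasDerivAt (fun τ => Greg b ρ μ dd (h τ) (x τ))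
      (2 * (∑ i, (vinner (h' i) (gradGh b ρ μ dd (h t) i)).re
        + ∑ i, (vinner (x' i) (gradGx ρ dd (x t) i)).re)) t := by
  have hspike : ∀ i l, HasDerivAt
      (fun τ => G0 (L * ‖vinner (b l) (h τ i)‖ ^ 2 / (8 * dd i * μ ^ 2)))
      (2 * (1 / (2 * dd i) * (L / (4 * μ ^ 2)
        * (G0' (L * ‖vinner (b l) (h t i)‖ ^ 2 / (8 * dd i * μ ^ 2))
          * (conj (vinner (b l) (h' i)) * vinner (b l) (h t i)).re)))) t := fun i l =>
    ((hasDerivAt_G0 _).comp t (((hasDerivAt_norm_sq (hasDerivAt_vinner_right (b l)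
      (hasDerivAt_pi.1 hh i))).const_mul (L : ℝ)).div_const _)).congr_deriv
      (by simp only [div_eq_mul_inv, mul_inv]; ring)
  refine (HasDerivAt.fun_sum (u := univ) fun i _ =>
    (((hasDerivAt_G0_vnormSq (2 * dd i) (hasDerivAt_pi.1 hh i)).add
      (hasDerivAt_G0_vnormSq (2 * dd i) (hasDerivAt_pi.1 hx i))).add
      (HasDerivAt.fun_sum (u := univ) fun l _ => hspike i l)).const_mul ρ).congr_deriv ?_
  rw [← sum_add_distrib, mul_sum]
  refine sum_congr rfl fun i _ => ?_
  rw [re_vinner_gradGh, re_vinner_gradGx, ← mul_sum, ← mul_sum, ← mul_sum]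
  ring

lemma hasDerivAt_Ftil (hh : HasDerivAt h h' t) (hx : HasDerivAt x x' t) :
    HasDerivAt (fun τ => Ftil b a h₀ x₀ e ρ μ dd (h τ) (x τ))
      (2 * (∑ i, (vinner (h' i) (gradH b a h₀ x₀ e ρ μ dd (h t) (x t) i)).re
        + ∑ i, (vinner (x' i) (gradX b a h₀ x₀ e ρ μ dd (h t) (x t) i)).re)) t := by
  refine ((hasDerivAt_Fobj b a h₀ x₀ e hh hx).add
    (hasDerivAt_Greg b ρ μ dd hh hx)).congr_deriv ?_
  unfold gradH gradX
  simp only [vinner_add_right, Complex.add_re, sum_add_distrib]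
  ring

end Gradient

/-! ### Points as vectors of a Euclidean space -/

section PairSpace

variable {K N L s : ℕ}

/-- The space `ℂ^{s(K+N)}` of points `z = (h, x)` with its Euclidean norm; `Sum.inl (i, k)` indexes
the `k`-th entry of `hᵢ` and `Sum.inr (i, j)` the `j`-th entry of `xᵢ`. -/
abbrev PairSpace (K N s : ℕ) : Type := EuclideanSpace ℂ (Fin s × Fin K ⊕ Fin s × Fin N)

/-- The component `h` of a point `z = (h, x)`. -/
def hPart (z : PairSpace K N s) : Fin s → Fin K → ℂ := fun i k => z (Sum.inl (i, k))

/-- The component `x` of a point `z = (h, x)`. -/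
def xPart (z : PairSpace K N s) : Fin s → Fin N → ℂ := fun i j => z (Sum.inr (i, j))

/-- The point `(h, x)` as a single vector. -/
def stack (h : Fin s → Fin K → ℂ) (x : Fin s → Fin N → ℂ) : PairSpace K N s :=
  WithLp.toLp 2 (Sum.elim (fun p => h p.1 p.2) fun p => x p.1 p.2)

lemma norm_eq_pairNorm (z : PairSpace K N s) : ‖z‖ = pairNorm (hPart z) (xPart z) := by
  rw [EuclideanSpace.norm_eq, Fintype.sum_sum_type, Fintype.sum_prod_type, Fintype.sum_prod_type]
  rfl

lemma real_inner_eq_sum (z w : PairSpace K N s) :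
    inner ℝ z w = ∑ i, (vinner (hPart z i) (hPart w i)).re
      + ∑ i, (vinner (xPart z i) (xPart w i)).re := by
  rw [PiLp.inner_apply, Fintype.sum_sum_type, Fintype.sum_prod_type, Fintype.sum_prod_type]
  simp only [vinner, Complex.re_sum, hPart, xPart, Complex.inner, mul_comm]

lemma hPart_add_smul (z w : PairSpace K N s) (t : ℝ) :
    hPart (z + t • w) = shiftV (hPart z) (hPart w) t := rfl

lemma xPart_add_smul (z w : PairSpace K N s) (t : ℝ) :
    xPart (z + t • w) = shiftV (xPart z) (xPart w) t := rfl

lemma hasDerivAt_shiftV {n : ℕ} (u w : Fin s → Fin n → ℂ) (t : ℝ) :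
    HasDerivAt (shiftV u w) w t :=
  hasDerivAt_pi.2 fun i => hasDerivAt_pi.2 fun k => by
    simpa [shiftV] using
      ((Complex.ofRealCLM.hasDerivAt (x := t)).mul_const (w i k)).const_add (u i k)

variable (b : Fin L → Fin K → ℂ) (a : Fin s → Fin L → Fin N → ℂ) (h₀ : Fin s → Fin K → ℂ)
  (x₀ : Fin s → Fin N → ℂ) (e : Fin L → ℂ) (d₀ : Fin s → ℝ) (ρ μ : ℝ) (dd : Fin s → ℝ) (ε CL : ℝ)

/-- The regularized objective `F̃` as a function of the point `z = (h, x)`. -/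
def objective (z : PairSpace K N s) : ℝ := Ftil b a h₀ x₀ e ρ μ dd (hPart z) (xPart z)

/-- The stacked Wirtinger gradient `∇F̃(z)`. It is one half of the gradient of `F̃` for the real
inner product. -/
def wirtingerGrad (z : PairSpace K N s) : PairSpace K N s :=
  stack (gradH b a h₀ x₀ e ρ μ dd (hPart z) (xPart z))
    (gradX b a h₀ x₀ e ρ μ dd (hPart z) (xPart z))

lemma norm_wirtingerGrad_sq (z : PairSpace K N s) :
    ‖wirtingerGrad b a h₀ x₀ e ρ μ dd z‖ ^ 2
      = gradNormSq b a h₀ x₀ e ρ μ dd (hPart z) (xPart z) := by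
  rw [norm_eq_pairNorm]
  exact Real.sq_sqrt (add_nonneg (sum_nonneg fun _ _ => vnormSq_nonneg _)
    (sum_nonneg fun _ _ => vnormSq_nonneg _))

lemma hasLineDerivAt_objective (z w : PairSpace K N s) :
    HasLineDerivAt ℝ (objective b a h₀ x₀ e ρ μ dd)
      (inner ℝ ((2 : ℝ) • wirtingerGrad b a h₀ x₀ e ρ μ dd z) w) z w := by
  have h := hasDerivAt_Ftil b a h₀ x₀ e ρ μ dd (hasDerivAt_shiftV (hPart z) (hPart w) 0)
    (hasDerivAt_shiftV (xPart z) (xPart w) 0)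
  rw [← hPart_add_smul, ← xPart_add_smul, zero_smul, add_zero] at h
  rw [real_inner_smul_left, real_inner_comm, real_inner_eq_sum]
  exact h

/-- The local smoothness condition: `∇F̃` is Lipschitz with constant `C_L` along every segment
contained in `𝒩_ε ∩ 𝒩_F̃`. -/
def LocalSmoothness : Prop :=
  ∀ (h : Fin s → Fin K → ℂ) (x : Fin s → Fin N → ℂ)
    (wh : Fin s → Fin K → ℂ) (wx : Fin s → Fin N → ℂ),
    (∀ τ : ℝ, τ ∈ Set.Icc (0 : ℝ) 1 →
      inNeps h₀ x₀ d₀ ε (shiftV h wh τ) (shiftV x wx τ) ∧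
      inNF b a h₀ x₀ e d₀ ρ μ dd ε (shiftV h wh τ) (shiftV x wx τ)) →
    ∀ t : ℝ, t ∈ Set.Icc (0 : ℝ) 1 →
      Real.sqrt (gradDiffNormSq b a h₀ x₀ e ρ μ dd h x (shiftV h wh t) (shiftV x wx t))
        ≤ CL * t * pairNorm wh wx

/-- The local regularity condition: `‖∇F̃(z)‖² ≥ ω max(F̃(z) − c, 0)` on `𝒩_d ∩ 𝒩_μ ∩ 𝒩_ε`. -/
def LocalRegularity (ω c : ℝ) : Prop :=
  ∀ (h : Fin s → Fin K → ℂ) (x : Fin s → Fin N → ℂ),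
    inNd d₀ h x → inNmu b d₀ μ h → inNeps h₀ x₀ d₀ ε h x →
      gradNormSq b a h₀ x₀ e ρ μ dd h x ≥ ω * max (Ftil b a h₀ x₀ e ρ μ dd h x - c) 0

variable {b a h₀ x₀ e d₀ ρ μ dd ε CL}

lemma LocalSmoothness.norm_sub_le (hLip : LocalSmoothness b a h₀ x₀ e d₀ ρ μ dd ε CL)
    {z w : PairSpace K N s}
    (hzw : ∀ p ∈ segment ℝ z w, inNeps h₀ x₀ d₀ ε (hPart p) (xPart p) ∧
      inNF b a h₀ x₀ e d₀ ρ μ dd ε (hPart p) (xPart p)) :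
    ‖wirtingerGrad b a h₀ x₀ e ρ μ dd w - wirtingerGrad b a h₀ x₀ e ρ μ dd z‖
      ≤ CL * ‖w - z‖ := by
  have hend : z + (1 : ℝ) • (w - z) = w := by rw [one_smul, add_sub_cancel]
  have h := hLip (hPart z) (xPart z) (hPart (w - z)) (xPart (w - z))
    (fun τ hτ => hzw (z + τ • (w - z)) (segment_eq_image' ℝ z w ▸ Set.mem_image_of_mem _ hτ))
    1 (Set.right_mem_Icc.2 zero_le_one)
  rw [← hPart_add_smul, ← xPart_add_smul, hend, mul_one, ← norm_eq_pairNorm] at h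
  rw [norm_eq_pairNorm]
  exact h

variable (h₀ x₀ d₀)

lemma continuous_deltaI (i : Fin s) :
    Continuous fun z : PairSpace K N s =>
      deltaI (h₀ i) (x₀ i) (d₀ i) (hPart z i) (xPart z i) := by
  simp only [deltaI, frob, frobSq, rankOne, Matrix.sub_apply, Matrix.of_apply, hPart, xPart]
  fun_prop

end PairSpace

/-! ### The regularizer and the neighbourhoods `𝒩_d`, `𝒩_μ` -/

section Regularizer

variable {K N L s : ℕ} {b : Fin L → Fin K → ℂ} {ρ μ : ℝ} {d₀ dd : Fin s → ℝ}
  {h : Fin s → Fin K → ℂ} {x : Fin s → Fin N → ℂ}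

lemma G0_nonneg (z : ℝ) : 0 ≤ G0 z := sq_nonneg _

lemma G0_eq_zero {z : ℝ} (hz : z ≤ 1) : G0 z = 0 := by
  rw [G0, max_eq_right (sub_nonpos.2 hz), zero_pow two_ne_zero]

lemma le_one_add_of_G0_le_sq {z c : ℝ} (hc : 0 ≤ c) (hz : G0 z ≤ c ^ 2) : z ≤ 1 + c := by
  have : z - 1 ≤ c := (le_max_left _ 0).trans ((sq_le_sq₀ (le_max_right _ _) hc).1 hz)
  linarith

lemma Gi_nonneg (b : Fin L → Fin K → ℂ) (hρ : 0 ≤ ρ) (μ di : ℝ) (u : Fin K → ℂ) (v : Fin N → ℂ) :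
    0 ≤ Gi b ρ μ di u v :=
  mul_nonneg hρ <| add_nonneg (add_nonneg (G0_nonneg _) (G0_nonneg _)) <|
    sum_nonneg fun _ _ => G0_nonneg _

lemma Greg_nonneg (hρ : 0 ≤ ρ) : 0 ≤ Greg b ρ μ dd h x :=
  sum_nonneg fun _ _ => Gi_nonneg b hρ _ _ _ _

lemma le_one_add_of_Gi_le {di c : ℝ} {u : Fin K → ℂ} {v : Fin N → ℂ} (hρ : 0 < ρ) (hc : 0 ≤ c)
    (hG : Gi b ρ μ di u v ≤ ρ * c ^ 2) :
    vnormSq u / (2 * di) ≤ 1 + c ∧ vnormSq v / (2 * di) ≤ 1 + c ∧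
      ∀ l, L * ‖vinner (b l) u‖ ^ 2 / (8 * di * μ ^ 2) ≤ 1 + c := by
  have hsum := le_of_mul_le_mul_left hG hρ
  have hu := G0_nonneg (vnormSq u / (2 * di))
  have hv := G0_nonneg (vnormSq v / (2 * di))
  have hspike : ∀ l ∈ univ, 0 ≤ G0 (L * ‖vinner (b l) u‖ ^ 2 / (8 * di * μ ^ 2)) :=
    fun _ _ => G0_nonneg _
  have hspikes := sum_nonneg hspike
  refine ⟨le_one_add_of_G0_le_sq hc (by linarith), le_one_add_of_G0_le_sq hc (by linarith),
    fun l => le_one_add_of_G0_le_sq hc ?_⟩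
  have := single_le_sum hspike (mem_univ l)
  linarith

lemma vnorm_le_mul_sqrt_iff {n : ℕ} {v : Fin n → ℂ} {c δ : ℝ} (hc : 0 ≤ c) (hδ : 0 ≤ δ) :
    vnorm v ≤ c * Real.sqrt δ ↔ vnormSq v ≤ c ^ 2 * δ := by
  rw [vnorm, Real.sqrt_le_left (by positivity), mul_pow, Real.sq_sqrt hδ]

lemma sqrt_mul_le_mul_sqrt_mul_iff {p q c δ ν : ℝ} (hp : 0 ≤ p) (hq : 0 ≤ q) (hc : 0 ≤ c)
    (hδ : 0 ≤ δ) (hν : 0 ≤ ν) :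
    Real.sqrt p * q ≤ c * Real.sqrt δ * ν ↔ p * q ^ 2 ≤ c ^ 2 * δ * ν ^ 2 := by
  rw [← sq_le_sq₀ (by positivity) (by positivity)]
  simp only [mul_pow, Real.sq_sqrt hp, Real.sq_sqrt hδ]

/-- The constant `c = 9 / 11` solves `2 · 1.1 · (1 + c) = 2²`. -/
lemma inNd_and_inNmu_of_Greg_le (hρ : 0 < ρ) (hμ : 0 < μ) (hd₀ : ∀ i, 0 < d₀ i)
    (hdd : ∀ i, 0 < dd i ∧ dd i ≤ 1.1 * d₀ i) (hG : Greg b ρ μ dd h x ≤ ρ * (9 / 11) ^ 2) :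
    inNd d₀ h x ∧ inNmu b d₀ μ h := by
  have hblock : ∀ i, Gi b ρ μ (dd i) (h i) (x i) ≤ ρ * (9 / 11) ^ 2 := fun i =>
    (single_le_sum (f := fun i => Gi b ρ μ (dd i) (h i) (x i))
      (fun _ _ => Gi_nonneg b hρ.le _ _ _ _) (mem_univ i)).trans hG
  have hbound := fun i => le_one_add_of_Gi_le hρ (by norm_num) (hblock i)
  have hnorm : ∀ {n : ℕ} (w : Fin n → ℂ) (i : Fin s), vnormSq w / (2 * dd i) ≤ 1 + 9 / 11 →
      vnorm w ≤ 2 * Real.sqrt (d₀ i) := fun w i hw => by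
    obtain ⟨hpos, hle⟩ := hdd i
    rw [div_le_iff₀ (by positivity)] at hw
    exact (vnorm_le_mul_sqrt_iff zero_le_two (hd₀ i).le).2 (by linarith)
  refine ⟨fun i => ⟨hnorm _ i (hbound i).1, hnorm _ i (hbound i).2.1⟩, fun i l => ?_⟩
  obtain ⟨hpos, hle⟩ := hdd i
  have hspike := (hbound i).2.2 l
  rw [div_le_iff₀ (by positivity)] at hspike
  rw [sqrt_mul_le_mul_sqrt_mul_iff (Nat.cast_nonneg L) (norm_nonneg _) zero_le_four (hd₀ i).le
    hμ.le]
  linarith [mul_le_mul_of_nonneg_right hle (sq_nonneg μ)]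

lemma Greg_eq_zero (hμ : 0 < μ) (hd₀ : ∀ i, 0 < d₀ i) (hdd : ∀ i, 0.9 * d₀ i ≤ dd i)
    (hh : ∀ i, vnorm (h i) ≤ 2 / Real.sqrt 3 * Real.sqrt (d₀ i))
    (hx : ∀ i, vnorm (x i) ≤ 2 / Real.sqrt 3 * Real.sqrt (d₀ i))
    (hhμ : ∀ i l, Real.sqrt L * ‖vinner (b l) (h i)‖
      ≤ 4 / Real.sqrt 3 * Real.sqrt (d₀ i) * μ) :
    Greg b ρ μ dd h x = 0 := by
  have hpos : ∀ i, 0 < dd i := fun i => by linarith [hd₀ i, hdd i]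
  have h3 : Real.sqrt 3 ^ 2 = 3 := Real.sq_sqrt zero_le_three
  have hnorm : ∀ {n : ℕ} (w : Fin n → ℂ) (i : Fin s),
      vnorm w ≤ 2 / Real.sqrt 3 * Real.sqrt (d₀ i) → G0 (vnormSq w / (2 * dd i)) = 0 := by
    intro n w i hw
    rw [vnorm_le_mul_sqrt_iff (by positivity) (hd₀ i).le, div_pow, h3] at hw
    have := hpos i
    exact G0_eq_zero ((div_le_one (by positivity)).2 (by linarith [hd₀ i, hdd i]))
  have hspike : ∀ i l, G0 (L * ‖vinner (b l) (h i)‖ ^ 2 / (8 * dd i * μ ^ 2)) = 0 := by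
    intro i l
    have hle := hhμ i l
    rw [sqrt_mul_le_mul_sqrt_mul_iff (Nat.cast_nonneg L) (norm_nonneg _) (by positivity)
      (hd₀ i).le hμ.le, div_pow, h3] at hle
    have := hpos i
    refine G0_eq_zero ((div_le_one (by positivity)).2 (hle.trans ?_))
    exact mul_le_mul_of_nonneg_right (by linarith [hd₀ i, hdd i]) (sq_nonneg μ)
  exact sum_eq_zero fun i _ => by simp [Gi, hnorm _ i (hh i), hnorm _ i (hx i), hspike]

end Regularizer

/-! ### The basin of attraction -/

section Basin

variable {K N L s : ℕ} {b : Fin L → Fin K → ℂ} {a : Fin s → Fin L → Fin N → ℂ}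
  {h₀ : Fin s → Fin K → ℂ} {x₀ : Fin s → Fin N → ℂ} {e : Fin L → ℂ} {d₀ dd : Fin s → ℝ}
  {ρ μ ε : ℝ} {h : Fin s → Fin K → ℂ} {x : Fin s → Fin N → ℂ}

lemma one_le_kappa (hs : 0 < s) (hd₀ : ∀ i, 0 < d₀ i) : 1 ≤ kappa d₀ := by
  have : Nonempty (Fin s) := ⟨⟨0, hs⟩⟩
  obtain ⟨m, hm⟩ := exists_eq_ciInf_of_finite (f := d₀)
  rw [kappa, ← hm, one_le_div (hd₀ m)]
  exact le_ciSup (Set.finite_range d₀).bddAbove m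

lemma le_kappa_mul (hs : 0 < s) (hd₀ : ∀ i, 0 < d₀ i) (i j : Fin s) : d₀ j ≤ kappa d₀ * d₀ i := by
  have : Nonempty (Fin s) := ⟨⟨0, hs⟩⟩
  obtain ⟨m, hm⟩ := exists_eq_ciInf_of_finite (f := d₀)
  calc d₀ j ≤ ⨆ i, d₀ i := le_ciSup (Set.finite_range d₀).bddAbove j
    _ = kappa d₀ * d₀ m := by rw [kappa, ← hm, div_mul_cancel₀ _ (hd₀ m).ne']
    _ ≤ kappa d₀ * d₀ i := mul_le_mul_of_nonneg_left
        (hm ▸ ciInf_le (Set.finite_range d₀).bddBelow i) (zero_le_one.trans (one_le_kappa hs hd₀))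

lemma dtot_le (hs : 0 < s) (hd₀ : ∀ i, 0 < d₀ i) (i : Fin s) :
    dtot d₀ ≤ Real.sqrt s * kappa d₀ * d₀ i := by
  have hκ := one_le_kappa hs hd₀
  have hi := hd₀ i
  rw [mul_assoc, dtot, Real.sqrt_le_left (by positivity), mul_pow, Real.sq_sqrt (Nat.cast_nonneg s)]
  calc ∑ j, d₀ j ^ 2 ≤ ∑ _j : Fin s, (kappa d₀ * d₀ i) ^ 2 :=
        sum_le_sum fun j _ => pow_le_pow_left₀ (hd₀ j).le (le_kappa_mul hs hd₀ i j) 2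
    _ = s * (kappa d₀ * d₀ i) ^ 2 := by simp

lemma dtot_nonneg (d₀ : Fin s → ℝ) : 0 ≤ dtot d₀ := Real.sqrt_nonneg _

lemma dtot_pos (hs : 0 < s) (hd₀ : ∀ i, 0 < d₀ i) : 0 < dtot d₀ :=
  Real.sqrt_pos.2 (sum_pos (fun i _ => pow_pos (hd₀ i) 2) ⟨⟨0, hs⟩, mem_univ _⟩)

lemma one_le_sqrt_mul_kappa (hs : 0 < s) (hd₀ : ∀ i, 0 < d₀ i) :
    1 ≤ Real.sqrt s * kappa d₀ :=
  one_le_mul_of_one_le_of_one_le (Real.one_le_sqrt.2 (Nat.one_le_cast.2 hs)) (one_le_kappa hs hd₀)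

/-- The radius `r = ε d₀ / (√s κ)` of the basin of attraction: `𝒩_F̃` is the sublevel set
`F̃ ≤ r²/3 + ‖e‖²`, and `‖ℋ(z) − X₀‖_F < r` on `𝒩_ε ∩ 𝒩_F̃`. -/
def basinRadius (d₀ : Fin s → ℝ) (ε : ℝ) : ℝ := ε * dtot d₀ / (Real.sqrt s * kappa d₀)

lemma basinRadius_sq (d₀ : Fin s → ℝ) (ε : ℝ) :
    basinRadius d₀ ε ^ 2 = ε ^ 2 * dtot d₀ ^ 2 / (s * kappa d₀ ^ 2) := by
  rw [basinRadius, div_pow, mul_pow, mul_pow, Real.sq_sqrt (Nat.cast_nonneg s)]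

lemma basinRadius_pos (hs : 0 < s) (hd₀ : ∀ i, 0 < d₀ i) (hε : 0 < ε) : 0 < basinRadius d₀ ε :=
  div_pos (mul_pos hε (dtot_pos hs hd₀)) (zero_lt_one.trans_le (one_le_sqrt_mul_kappa hs hd₀))

lemma basinRadius_le_mul_dtot (hs : 0 < s) (hd₀ : ∀ i, 0 < d₀ i) (hε : 0 ≤ ε) :
    basinRadius d₀ ε ≤ ε * dtot d₀ :=
  div_le_self (mul_nonneg hε (dtot_nonneg d₀)) (one_le_sqrt_mul_kappa hs hd₀)

lemma basinRadius_le_mul (hs : 0 < s) (hd₀ : ∀ i, 0 < d₀ i) (hε : 0 ≤ ε) (i : Fin s) :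
    basinRadius d₀ ε ≤ ε * d₀ i := by
  rw [basinRadius, div_le_iff₀ (zero_lt_one.trans_le (one_le_sqrt_mul_kappa hs hd₀))]
  calc ε * dtot d₀ ≤ ε * (Real.sqrt s * kappa d₀ * d₀ i) :=
        mul_le_mul_of_nonneg_left (dtot_le hs hd₀ i) hε
    _ = ε * d₀ i * (Real.sqrt s * kappa d₀) := by ring

lemma inNF_iff : inNF b a h₀ x₀ e d₀ ρ μ dd ε h x ↔
    Ftil b a h₀ x₀ e ρ μ dd h x ≤ basinRadius d₀ ε ^ 2 / 3 + vnormSq e := by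
  rw [inNF, basinRadius_sq, div_div, mul_comm _ (3 : ℝ), ← mul_assoc]

lemma sqrt_two_mul_AadjNorm_le (hs : 0 < s)
    (hAe : AadjNorm b a e ≤ ε * dtot d₀ / (10 * Real.sqrt 2 * s * kappa d₀)) :
    Real.sqrt 2 * (Real.sqrt s * AadjNorm b a e) ≤ basinRadius d₀ ε / 10 := by
  have : (0 : ℝ) < Real.sqrt s := Real.sqrt_pos.2 (Nat.cast_pos.2 hs)
  calc Real.sqrt 2 * (Real.sqrt s * AadjNorm b a e)
      ≤ Real.sqrt 2 * (Real.sqrt s *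
          (ε * dtot d₀ / (10 * Real.sqrt 2 * (Real.sqrt s * Real.sqrt s) * kappa d₀))) := by
        rw [Real.mul_self_sqrt (Nat.cast_nonneg s)]
        gcongr
    _ = basinRadius d₀ ε / 10 := by
        rw [basinRadius]
        field_simp

lemma inNd_and_inNmu_of_inNF (hs : 0 < s) (hμ : 0 < μ) (hε : 0 ≤ ε) (hε1 : ε ≤ 1)
    (hd₀ : ∀ i, 0 < d₀ i) (hdd : ∀ i, 0.9 * d₀ i ≤ dd i ∧ dd i ≤ 1.1 * d₀ i)
    (hρ : (0.9 * dtot d₀) ^ 2 + 2 * vnormSq e ≤ ρ) (hN : inNF b a h₀ x₀ e d₀ ρ μ dd ε h x) :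
    inNd d₀ h x ∧ inNmu b d₀ μ h := by
  have hdpos := dtot_pos hs hd₀
  have he := vnormSq_nonneg e
  have hr : basinRadius d₀ ε ^ 2 ≤ dtot d₀ ^ 2 :=
    pow_le_pow_left₀ (div_nonneg (by positivity) (zero_le_one.trans (one_le_sqrt_mul_kappa hs hd₀)))
      ((basinRadius_le_mul_dtot hs hd₀ hε).trans (mul_le_of_le_one_left hdpos.le hε1)) 2
  have hF : 0 ≤ Fobj b a h₀ x₀ e h x := vnormSq_nonneg _
  have hG := inNF_iff.1 hN
  rw [Ftil] at hG
  refine inNd_and_inNmu_of_Greg_le (x := x) (by nlinarith) hμ hd₀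
    (fun i => ⟨by linarith [hd₀ i, (hdd i).1], (hdd i).2⟩) (?_ : Greg b ρ μ dd h x ≤ _)
  linarith [sq_nonneg (dtot d₀)]

lemma le_Ftil (hρ : 0 ≤ ρ) (hRIP : LocalRIP b a h₀ x₀ d₀ μ ε) (hd : inNd d₀ h x)
    (hm : inNmu b d₀ μ h) (hN : inNeps h₀ x₀ d₀ ε h x) :
    2 / 3 * famFrob (fun i => Hmap h x i - Hmap h₀ x₀ i) ^ 2
      - 2 * (Real.sqrt 2 * (Real.sqrt s * AadjNorm b a e))
        * famFrob (fun i => Hmap h x i - Hmap h₀ x₀ i) + vnormSq e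
      ≤ Ftil b a h₀ x₀ e ρ μ dd h x := by
  have hcross := (abs_le.1 (abs_re_vinner_calA_le b a h₀ h x₀ x e)).2
  have hG : 0 ≤ Greg b ρ μ dd h x := Greg_nonneg hρ
  rw [Ftil, Fobj_eq, famFrob_sq]
  linarith [(hRIP h x hd hm hN).1]

lemma Fobj_le (hRIP : LocalRIP b a h₀ x₀ d₀ μ ε) (hd : inNd d₀ h x)
    (hm : inNmu b d₀ μ h) (hN : inNeps h₀ x₀ d₀ ε h x) :
    Fobj b a h₀ x₀ e h x ≤ 3 / 2 * famFrob (fun i => Hmap h x i - Hmap h₀ x₀ i) ^ 2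
      + 2 * (Real.sqrt 2 * (Real.sqrt s * AadjNorm b a e))
        * famFrob (fun i => Hmap h x i - Hmap h₀ x₀ i) + vnormSq e := by
  have hcross := (abs_le.1 (abs_re_vinner_calA_le b a h₀ h x₀ x e)).1
  rw [Fobj_eq, famFrob_sq]
  linarith [(hRIP h x hd hm hN).2]

lemma famFrob_le_of_deltaI_le (hd₀ : ∀ i, 0 < d₀ i) {q : ℝ} (hq : 0 ≤ q)
    (hδ : ∀ i, deltaI (h₀ i) (x₀ i) (d₀ i) (h i) (x i) ≤ q) :
    famFrob (fun i => Hmap h x i - Hmap h₀ x₀ i) ≤ q * dtot d₀ := by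
  rw [famFrob, Real.sqrt_le_left (mul_nonneg hq (dtot_nonneg d₀)), mul_pow, dtot,
    Real.sq_sqrt (sum_nonneg fun _ _ => sq_nonneg _), mul_sum]
  refine sum_le_sum fun i _ => ?_
  rw [← frob_sq, ← mul_pow]
  exact pow_le_pow_left₀ (frob_nonneg _) ((div_le_iff₀ (hd₀ i)).1 (hδ i)) 2

lemma famFrob_lt_basinRadius (hs : 0 < s) (hε : 0 < ε) (hd₀ : ∀ i, 0 < d₀ i) (hρ : 0 ≤ ρ)
    (hRIP : LocalRIP b a h₀ x₀ d₀ μ ε)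
    (hAe : AadjNorm b a e ≤ ε * dtot d₀ / (10 * Real.sqrt 2 * s * kappa d₀))
    (hd : inNd d₀ h x) (hm : inNmu b d₀ μ h) (hN : inNeps h₀ x₀ d₀ ε h x)
    (hF : inNF b a h₀ x₀ e d₀ ρ μ dd ε h x) :
    famFrob (fun i => Hmap h x i - Hmap h₀ x₀ i) < basinRadius d₀ ε := by
  have hr := basinRadius_pos hs hd₀ hε
  have hle := (le_Ftil hρ hRIP hd hm hN).trans (inNF_iff.1 hF)
  have hA := sqrt_two_mul_AadjNorm_le hs hAe
  set D := famFrob fun i => Hmap h x i - Hmap h₀ x₀ i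
  by_contra! hD
  have hAD := mul_le_mul_of_nonneg_right hA (hr.le.trans hD)
  nlinarith [mul_nonneg hr.le (sub_nonneg.2 hD), sq_nonneg (D - basinRadius d₀ ε)]

lemma isDescentRegion_objective (hs : 0 < s) (hμ : 0 < μ) (hε : 0 < ε) (hε1 : ε ≤ 1)
    (hd₀ : ∀ i, 0 < d₀ i) (hdd : ∀ i, 0.9 * d₀ i ≤ dd i ∧ dd i ≤ 1.1 * d₀ i)
    (hρ : (0.9 * dtot d₀) ^ 2 + 2 * vnormSq e ≤ ρ) (hRIP : LocalRIP b a h₀ x₀ d₀ μ ε)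
    (hAe : AadjNorm b a e ≤ ε * dtot d₀ / (10 * Real.sqrt 2 * s * kappa d₀)) {CL : ℝ}
    (hLip : LocalSmoothness b a h₀ x₀ e d₀ ρ μ dd ε CL) :
    IsDescentRegion (objective b a h₀ x₀ e ρ μ dd)
      (fun z => (2 : ℝ) • wirtingerGrad b a h₀ x₀ e ρ μ dd z)
      {z | inNeps h₀ x₀ d₀ ε (hPart z) (xPart z)}
      (basinRadius d₀ ε ^ 2 / 3 + vnormSq e) (2 * CL) where
  isClosed := by
    simp only [inNeps, Set.ofPred_forall]
    exact isClosed_iInter fun i => isClosed_le (continuous_deltaI h₀ x₀ d₀ i) continuous_const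
  hasLineDerivAt := hasLineDerivAt_objective b a h₀ x₀ e ρ μ dd
  subset_interior := by
    rintro z ⟨hN, hF⟩
    have hNF := inNF_iff.2 hF
    obtain ⟨hd, hm⟩ := inNd_and_inNmu_of_inNF hs hμ hε.le hε1 hd₀ hdd hρ hNF
    have hρ0 : 0 ≤ ρ := le_trans (by have := vnormSq_nonneg e; positivity) hρ
    have hstrict : ∀ i, deltaI (h₀ i) (x₀ i) (d₀ i) (hPart z i) (xPart z i) < ε := fun i =>
      (div_lt_iff₀ (hd₀ i)).2 <| ((frob_le_famFrob _ i).trans_lt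
        (famFrob_lt_basinRadius hs hε hd₀ hρ0 hRIP hAe hd hm hN hNF)).trans_le
        (basinRadius_le_mul hs hd₀ hε.le i)
    rw [mem_interior_iff_mem_nhds]
    filter_upwards [Filter.eventually_all.2 fun i =>
      (continuous_deltaI h₀ x₀ d₀ i).continuousAt.eventually_lt continuousAt_const (hstrict i)]
      with w hw i using (hw i).le
  norm_sub_le z w hzw := by
    have := hLip.norm_sub_le fun p hp => ⟨(hzw hp).1, inNF_iff.2 (hzw hp).2⟩
    rw [← smul_sub, norm_smul, Real.norm_two, mul_assoc]
    exact mul_le_mul_of_nonneg_left this zero_le_two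

lemma inNeps_and_inNF_of_deltaI_le (hs : 0 < s) (hμ : 0 < μ) (hε : 0 < ε)
    (hd₀ : ∀ i, 0 < d₀ i) (hdd : ∀ i, 0.9 * d₀ i ≤ dd i) (hRIP : LocalRIP b a h₀ x₀ d₀ μ ε)
    (hAe : AadjNorm b a e ≤ ε * dtot d₀ / (10 * Real.sqrt 2 * s * kappa d₀))
    (hh : ∀ i, vnorm (h i) ≤ 2 / Real.sqrt 3 * Real.sqrt (d₀ i))
    (hx : ∀ i, vnorm (x i) ≤ 2 / Real.sqrt 3 * Real.sqrt (d₀ i))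
    (hhμ : ∀ i l, Real.sqrt L * ‖vinner (b l) (h i)‖
      ≤ 4 / Real.sqrt 3 * Real.sqrt (d₀ i) * μ)
    (hδ : ∀ i, deltaI (h₀ i) (x₀ i) (d₀ i) (h i) (x i)
      ≤ 2 * ε / (5 * Real.sqrt s * kappa d₀)) :
    inNeps h₀ x₀ d₀ ε h x ∧ inNF b a h₀ x₀ e d₀ ρ μ dd ε h x := by
  have hsκ := one_le_sqrt_mul_kappa hs hd₀
  have hr := basinRadius_pos hs hd₀ hε
  have hA := sqrt_two_mul_AadjNorm_le hs hAe
  have hq : 2 * ε / (5 * Real.sqrt s * kappa d₀) ≤ ε := by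
    rw [mul_assoc, div_le_iff₀ (by linarith)]
    nlinarith
  have hq0 : 0 ≤ 2 * ε / (5 * Real.sqrt s * kappa d₀) :=
    div_nonneg (by linarith) (by linarith)
  have h3 : ∀ {c : ℝ}, 0 ≤ c → c / Real.sqrt 3 ≤ c := fun hc =>
    div_le_self hc (Real.one_le_sqrt.2 (by norm_num))
  have hd : inNd d₀ h x := fun i =>
    ⟨(hh i).trans (by gcongr; exact h3 zero_le_two), (hx i).trans (by gcongr; exact h3 zero_le_two)⟩
  have hm : inNmu b d₀ μ h := fun i l =>
    (hhμ i l).trans (by gcongr; exact h3 zero_le_four)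
  have hN : inNeps h₀ x₀ d₀ ε h x := fun i => (hδ i).trans hq
  have hD : famFrob (fun i => Hmap h x i - Hmap h₀ x₀ i) ≤ 2 / 5 * basinRadius d₀ ε :=
    (famFrob_le_of_deltaI_le hd₀ hq0 hδ).trans_eq (by rw [basinRadius]; ring)
  have hF := Fobj_le (e := e) hRIP hd hm hN
  have hD0 := famFrob_nonneg fun i => Hmap h x i - Hmap h₀ x₀ i
  refine ⟨hN, inNF_iff.2 ?_⟩
  rw [Ftil, Greg_eq_zero hμ hd₀ hdd hh hx hhμ, add_zero]
  have hsq := pow_le_pow_left₀ hD0 hD 2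
  have hcross := mul_le_mul hA hD hD0 (by positivity)
  nlinarith [sq_nonneg (basinRadius d₀ ε)]

lemma le_add_of_quadratic_le {D S A : ℝ} (hS : 0 ≤ S) (hA : 0 ≤ A)
    (h : 2 / 3 * D ^ 2 - 2 * (Real.sqrt 2 * A) * D - 2000 * A ^ 2 ≤ 2 / 3 * S ^ 2) :
    D ≤ S + 60 * A := by
  by_contra! hD
  have hD0 : 0 < D := by linarith
  have h2 : Real.sqrt 2 * A * D ≤ 3 / 2 * A * D := by
    gcongr
    exact Real.sqrt_le_iff.2 ⟨by norm_num, by norm_num⟩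
  nlinarith [mul_nonneg hS hA, mul_pos (sub_pos.2 hD) hD0,
    mul_nonneg (sub_nonneg.2 hD.le) hA, mul_nonneg (sub_nonneg.2 hD.le) hS]

lemma famFrob_le_of_Ftil_sub_le (hρ : 0 ≤ ρ) (hRIP : LocalRIP b a h₀ x₀ d₀ μ ε) (hd : inNd d₀ h x)
    (hm : inNmu b d₀ μ h) (hN : inNeps h₀ x₀ d₀ ε h x) {S : ℝ} (hS : 0 ≤ S)
    (hF : Ftil b a h₀ x₀ e ρ μ dd h x - (vnormSq e + 2000 * s * AadjNorm b a e ^ 2)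
      ≤ 2 / 3 * S ^ 2) :
    famFrob (fun i => Hmap h x i - Hmap h₀ x₀ i)
      ≤ S + 60 * Real.sqrt s * AadjNorm b a e := by
  have hlow : _ ≤ Ftil b a h₀ x₀ e ρ μ dd h x := le_Ftil hρ hRIP hd hm hN
  rw [mul_assoc]
  refine le_add_of_quadratic_le hS (mul_nonneg (Real.sqrt_nonneg _) (AadjNorm_nonneg b a e)) ?_
  rw [mul_pow (Real.sqrt s), Real.sq_sqrt (Nat.cast_nonneg s)]
  linarith

lemma rpow_half_sq {q : ℝ} (hq : 0 ≤ q) (t : ℕ) : (q ^ ((t : ℝ) / 2)) ^ 2 = q ^ t := by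
  rw [← Real.rpow_natCast, ← Real.rpow_mul hq, Nat.cast_ofNat, div_mul_cancel₀ _ two_ne_zero,
    Real.rpow_natCast]

lemma mul_dtot_div_sqrt (hs : 0 < s) (hd₀ : ∀ i, 0 < d₀ i) (ε : ℝ) :
    ε * dtot d₀ / Real.sqrt (2 * s * kappa d₀ ^ 2) = basinRadius d₀ ε / Real.sqrt 2 := by
  rw [Real.sqrt_mul (by positivity), Real.sqrt_mul zero_le_two,
    Real.sqrt_sq (zero_le_one.trans (one_le_kappa hs hd₀)), basinRadius, div_div]
  congr 1
  ring

lemma mul_max_le_norm_sq_of_localRegularity (hs : 0 < s) (hμ : 0 < μ) (hε : 0 ≤ ε) (hε1 : ε ≤ 1)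
    (hd₀ : ∀ i, 0 < d₀ i) (hdd : ∀ i, 0.9 * d₀ i ≤ dd i ∧ dd i ≤ 1.1 * d₀ i)
    (hρ : (0.9 * dtot d₀) ^ 2 + 2 * vnormSq e ≤ ρ) {ω c : ℝ}
    (hreg : LocalRegularity b a h₀ x₀ e d₀ ρ μ dd ε ω c) {z : PairSpace K N s}
    (hz : z ∈ {z | inNeps h₀ x₀ d₀ ε (hPart z) (xPart z)} ∩
      {z | objective b a h₀ x₀ e ρ μ dd z ≤ basinRadius d₀ ε ^ 2 / 3 + vnormSq e}) :
    2 * (2 * ω) * max (objective b a h₀ x₀ e ρ μ dd z - c) 0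
      ≤ ‖(2 : ℝ) • wirtingerGrad b a h₀ x₀ e ρ μ dd z‖ ^ 2 := by
  obtain ⟨hd, hm⟩ := inNd_and_inNmu_of_inNF hs hμ hε hε1 hd₀ hdd hρ (inNF_iff.2 hz.2)
  rw [norm_smul, mul_pow, norm_wirtingerGrad_sq, Real.norm_two, objective]
  linarith [hreg _ _ hd hm hz.1]

lemma stack_eq_sub_smul_wirtingerGrad {η : ℝ} {h' : Fin s → Fin K → ℂ} {x' : Fin s → Fin N → ℂ}
    (hh' : ∀ i k, h' i k = h i k - (η : ℂ) * gradH b a h₀ x₀ e ρ μ dd h x i k)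
    (hx' : ∀ i j, x' i j = x i j - (η : ℂ) * gradX b a h₀ x₀ e ρ μ dd h x i j) :
    stack h' x' = stack h x - η • wirtingerGrad b a h₀ x₀ e ρ μ dd (stack h x) := by
  ext (p | p)
  · exact hh' p.1 p.2
  · exact hx' p.1 p.2

lemma famFrob_le_of_max_Ftil_sub_le (hs : 0 < s) (hμ : 0 < μ) (hε : 0 < ε) (hε1 : ε ≤ 1)
    (hd₀ : ∀ i, 0 < d₀ i) (hdd : ∀ i, 0.9 * d₀ i ≤ dd i ∧ dd i ≤ 1.1 * d₀ i)
    (hρ : (0.9 * dtot d₀) ^ 2 + 2 * vnormSq e ≤ ρ) (hRIP : LocalRIP b a h₀ x₀ d₀ μ ε)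
    (hN : inNeps h₀ x₀ d₀ ε h x) (hNF : inNF b a h₀ x₀ e d₀ ρ μ dd ε h x) {q F₀ : ℝ} (hq : 0 ≤ q)
    (hF₀ : F₀ ≤ basinRadius d₀ ε ^ 2 / 3 + vnormSq e) (t : ℕ)
    (hF : max (Ftil b a h₀ x₀ e ρ μ dd h x - (vnormSq e + 2000 * s * AadjNorm b a e ^ 2)) 0
      ≤ q ^ t * max (F₀ - (vnormSq e + 2000 * s * AadjNorm b a e ^ 2)) 0) :
    famFrob (fun i => Hmap h x i - Hmap h₀ x₀ i)
      ≤ basinRadius d₀ ε / Real.sqrt 2 * q ^ ((t : ℝ) / 2)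
        + 60 * Real.sqrt s * AadjNorm b a e := by
  have hρ0 : 0 ≤ ρ := le_trans (by have := vnormSq_nonneg e; positivity) hρ
  have hr := basinRadius_pos hs hd₀ hε
  obtain ⟨hd, hm⟩ := inNd_and_inNmu_of_inNF hs hμ hε.le hε1 hd₀ hdd hρ hNF
  refine famFrob_le_of_Ftil_sub_le (dd := dd) hρ0 hRIP hd hm hN (by positivity) ?_
  have hnoise : 0 ≤ 2000 * s * AadjNorm b a e ^ 2 := by positivity
  have hexcess : max (F₀ - (vnormSq e + 2000 * s * AadjNorm b a e ^ 2)) 0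
      ≤ basinRadius d₀ ε ^ 2 / 3 := max_le (by linarith) (by positivity)
  calc Ftil b a h₀ x₀ e ρ μ dd h x - (vnormSq e + 2000 * s * AadjNorm b a e ^ 2)
      ≤ q ^ t * max (F₀ - (vnormSq e + 2000 * s * AadjNorm b a e ^ 2)) 0 :=
        (le_max_left _ _).trans hF
    _ ≤ q ^ t * (basinRadius d₀ ε ^ 2 / 3) := by gcongr
    _ = 2 / 3 * (basinRadius d₀ ε / Real.sqrt 2 * q ^ ((t : ℝ) / 2)) ^ 2 := by
        rw [mul_pow, rpow_half_sq hq, div_pow, Real.sq_sqrt zero_le_two]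
        ring

end Basin

theorem statement4_general
    {K N L s : ℕ} (hs : 0 < s) (b : Fin L → Fin K → ℂ) (a : Fin s → Fin L → Fin N → ℂ)
    (h₀ : Fin s → Fin K → ℂ) (x₀ : Fin s → Fin N → ℂ) (d₀ : Fin s → ℝ) (hd₀ : ∀ i, 0 < d₀ i)
    (e : Fin L → ℂ) (μ ρ ε : ℝ) (dd : Fin s → ℝ) (hμ : 0 < μ) (hε : 0 < ε) (hε1 : ε ≤ 1)
    (hdd : ∀ i, 0.9 * d₀ i ≤ dd i ∧ dd i ≤ 1.1 * d₀ i)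
    (hρ : (0.9 * dtot d₀) ^ 2 + 2 * vnormSq e ≤ ρ) (hRIP : LocalRIP b a h₀ x₀ d₀ μ ε)
    (hAe : AadjNorm b a e ≤ ε * dtot d₀ / (10 * Real.sqrt 2 * s * kappa d₀)) (ω : ℝ)
    (hreg : LocalRegularity b a h₀ x₀ e d₀ ρ μ dd ε ω
      (vnormSq e + 2000 * s * AadjNorm b a e ^ 2))
    (CL η : ℝ) (hη : 0 ≤ η) (hηCL : η * CL ≤ 1) (hηω : η * ω ≤ 1)
    (hLip : LocalSmoothness b a h₀ x₀ e d₀ ρ μ dd ε CL)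
    (u : ℕ → Fin s → Fin K → ℂ) (v : ℕ → Fin s → Fin N → ℂ)
    (hu0 : ∀ i, vnorm (u 0 i) ≤ 2 / Real.sqrt 3 * Real.sqrt (d₀ i))
    (hv0 : ∀ i, vnorm (v 0 i) ≤ 2 / Real.sqrt 3 * Real.sqrt (d₀ i))
    (hu0μ : ∀ i l, Real.sqrt L * ‖vinner (b l) (u 0 i)‖
      ≤ 4 / Real.sqrt 3 * Real.sqrt (d₀ i) * μ)
    (hinit : ∀ i, deltaI (h₀ i) (x₀ i) (d₀ i) (u 0 i) (v 0 i)
      ≤ 2 * ε / (5 * Real.sqrt s * kappa d₀))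
    (hu : ∀ t i k, u (t + 1) i k
      = u t i k - (η : ℂ) * gradH b a h₀ x₀ e ρ μ dd (u t) (v t) i k)
    (hv : ∀ t i j, v (t + 1) i j
      = v t i j - (η : ℂ) * gradX b a h₀ x₀ e ρ μ dd (u t) (v t) i j) (t : ℕ) :
    famFrob (fun i => Hmap (u t) (v t) i - Hmap h₀ x₀ i)
      ≤ ε * dtot d₀ / Real.sqrt (2 * s * kappa d₀ ^ 2) * (1 - η * ω) ^ ((t : ℝ) / 2)
        + 60 * Real.sqrt s * AadjNorm b a e := by
  have hR := isDescentRegion_objective hs hμ hε hε1 hd₀ hdd hρ hRIP hAe hLip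
  have hstart := inNeps_and_inNF_of_deltaI_le (e := e) (ρ := ρ) hs hμ hε hd₀ (fun i => (hdd i).1)
    hRIP hAe hu0 hv0 hu0μ hinit
  have hstep : ∀ t, stack (u (t + 1)) (v (t + 1)) = stack (u t) (v t)
      - (η / 2) • (2 : ℝ) • wirtingerGrad b a h₀ x₀ e ρ μ dd (stack (u t) (v t)) := fun t => by
    rw [smul_smul, div_mul_cancel₀ _ two_ne_zero]
    exact stack_eq_sub_smul_wirtingerGrad (hu t) (hv t)
  obtain ⟨⟨hN, hF⟩, hconv⟩ := hR.linear_convergence (z := fun t => stack (u t) (v t))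
    (by positivity) (by linarith) (by linarith)
    (fun z hz => mul_max_le_norm_sq_of_localRegularity hs hμ hε.le hε1 hd₀ hdd hρ hreg hz)
    ⟨hstart.1, inNF_iff.1 hstart.2⟩ hstep t
  rw [← mul_assoc, div_mul_cancel₀ _ two_ne_zero] at hconv
  rw [mul_dtot_div_sqrt hs hd₀]
  exact famFrob_le_of_max_Ftil_sub_le hs hμ hε hε1 hd₀ hdd hρ hRIP hN (inNF_iff.2 hF)
    (sub_nonneg.2 hηω) (inNF_iff.1 hstart.2) t hconv


/-- linear convergence of regularized Wirtinger gradient descent. -/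
theorem statement4
    {K N L s : ℕ} (hK : 0 < K) (hN : 0 < N) (hL : 0 < L) (hs : 0 < s)
    (b : Fin L → Fin K → ℂ) (hb : BtBeqI b)
    (a : Fin s → Fin L → Fin N → ℂ)
    (h0 : Fin s → Fin K → ℂ) (x0 : Fin s → Fin N → ℂ)
    (d0 : Fin s → ℝ) (hd0 : ∀ i, 0 < d0 i)
    (hh0 : ∀ i, vnorm (h0 i) = Real.sqrt (d0 i))
    (hx0 : ∀ i, vnorm (x0 i) = Real.sqrt (d0 i))
    (e : Fin L → ℂ) (μ ρ d ε : ℝ) (dd : Fin s → ℝ)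
    (hμ : 0 < μ) (hε : 0 < ε) (hε15 : ε ≤ 1 / 15)
    (hdd : ∀ i, 0.9 * d0 i ≤ dd i ∧ dd i ≤ 1.1 * d0 i)
    (hdlow : 0.9 * dtot d0 ≤ d) (hdhigh : d ≤ 1.1 * dtot d0)
    (hρ : d ^ 2 + 2 * vnormSq e ≤ ρ)
    (hRIP : LocalRIP b a h0 x0 d0 μ ε)
    (hAe : AadjNorm b a e ≤ ε * dtot d0 / (10 * Real.sqrt 2 * (s : ℝ) * kappa d0))
    (hreg : ∀ (h : Fin s → Fin K → ℂ) (x : Fin s → Fin N → ℂ),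
      inNd d0 h x → inNmu b d0 μ h → inNeps h0 x0 d0 ε h x →
        gradNormSq b a h0 x0 e ρ μ dd h x
          ≥ dtot d0 / 7000 *
            max (Ftil b a h0 x0 e ρ μ dd h x
              - (vnormSq e + 2000 * (s : ℝ) * AadjNorm b a e ^ 2)) 0)
    (CL η : ℝ) (hCL : 0 < CL) (hη0 : 0 < η) (hηCL : η ≤ 1 / CL)
    (hηω : η * (dtot d0 / 7000) ≤ 1)
    (hLip : ∀ (h : Fin s → Fin K → ℂ) (x : Fin s → Fin N → ℂ)
        (wh : Fin s → Fin K → ℂ) (wx : Fin s → Fin N → ℂ),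
      (∀ τ : ℝ, τ ∈ Set.Icc (0 : ℝ) 1 →
        inNeps h0 x0 d0 ε (shiftV h wh τ) (shiftV x wx τ) ∧
        inNF b a h0 x0 e d0 ρ μ dd ε (shiftV h wh τ) (shiftV x wx τ)) →
      ∀ t : ℝ, t ∈ Set.Icc (0 : ℝ) 1 →
        Real.sqrt (gradDiffNormSq b a h0 x0 e ρ μ dd h x (shiftV h wh t) (shiftV x wx t))
          ≤ CL * t * pairNorm wh wx)
    (u : ℕ → Fin s → Fin K → ℂ) (v : ℕ → Fin s → Fin N → ℂ)
    (hu0d : ∀ i, vnorm (u 0 i) ≤ 2 / Real.sqrt 3 * Real.sqrt (d0 i))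
    (hv0d : ∀ i, vnorm (v 0 i) ≤ 2 / Real.sqrt 3 * Real.sqrt (d0 i))
    (hu0μ : ∀ i l, Real.sqrt L * ‖vinner (b l) (u 0 i)‖
        ≤ 4 / Real.sqrt 3 * Real.sqrt (d0 i) * μ)
    (hinit : ∀ i, deltaI (h0 i) (x0 i) (d0 i) (u 0 i) (v 0 i)
        ≤ 2 * ε / (5 * Real.sqrt s * kappa d0))
    (hrecu : ∀ t i k, u (t + 1) i k
        = u t i k - (η : ℂ) * gradH b a h0 x0 e ρ μ dd (u t) (v t) i k)
    (hrecv : ∀ t i j, v (t + 1) i j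
        = v t i j - (η : ℂ) * gradX b a h0 x0 e ρ μ dd (u t) (v t) i j) :
    ∀ t : ℕ,
      famFrob (fun i => Hmap (u t) (v t) i - Hmap h0 x0 i)
        ≤ ε * dtot d0 / Real.sqrt (2 * (s : ℝ) * kappa d0 ^ 2)
            * (1 - η * (dtot d0 / 7000)) ^ ((t : ℝ) / 2)
          + 60 * Real.sqrt s * AadjNorm b a e := by
  have hρ' := (add_le_add_left (pow_le_pow_left₀ (mul_nonneg (by norm_num) (dtot_nonneg d0))
    hdlow 2) _).trans hρ
  exact statement4_general hs b a h0 x0 d0 hd0 e μ ρ ε dd hμ hε (by linarith) hdd hρ' hRIP hAe _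
    hreg CL η hη0.le ((le_div_iff₀ hCL).1 hηCL) hηω hLip u v hu0d hv0d hu0μ hinit hrecu hrecv

end RGD
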